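/- For a TS-module M of finite length and degree one, the following are equivalent: (1) M is perfect; (2) M admits a model, i.e. an injective TS-morphism M → C_b^∞(k^×); (3) the S-coinvariant module π_0(M) = M_S is a cyclic T-module and, for every smooth character χ of T with π_0(M)_{T,χ} ≠ 0, there exists an injective TS-morphism 𝔼[χ] → M. -/

import Mathlib

noncomputable section

open scoped Classical

namespace PSW

/-! ### The affine group `λ.b : x ↦ λ·x + b` over a field `K`. -/

@[ext]
structure Aff (K : Type*) [Field K] where
  t : Kˣ
  s : K

namespace Aff

variable {K : Type*} [Field K]

instance : Mul (Aff K) := ⟨fun g h => ⟨g.t * h.t, g.s + (g.t : K) * h.s⟩⟩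
instance : One (Aff K) := ⟨⟨1, 0⟩⟩
instance : Inv (Aff K) := ⟨fun g => ⟨g.t⁻¹, -(((g.t⁻¹ : Kˣ) : K) * g.s)⟩⟩

@[simp] lemma mul_t (g h : Aff K) : (g * h).t = g.t * h.t := rfl
@[simp] lemma mul_s (g h : Aff K) : (g * h).s = g.s + (g.t : K) * h.s := rfl
@[simp] lemma one_t : (1 : Aff K).t = 1 := rfl
@[simp] lemma one_s : (1 : Aff K).s = 0 := rfl
@[simp] lemma inv_t (g : Aff K) : (g⁻¹).t = g.t⁻¹ := rfl
@[simp] lemma inv_s (g : Aff K) : (g⁻¹).s = -(((g.t⁻¹ : Kˣ) : K) * g.s) := rfl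

instance : Group (Aff K) where
  mul_assoc a b c := by
    ext
    · simp [mul_assoc]
    · simp only [mul_s, mul_t, Units.val_mul]; ring
  one_mul a := by ext <;> simp
  mul_one a := by ext <;> simp
  inv_mul_cancel a := by
    ext
    · simp
    · simp

/-- The element `x_λ` of the group `TS`. -/
def xT (u : Kˣ) : Aff K := ⟨u, 0⟩

/-- The element `s_b` of the group `TS`. -/
def sS (b : K) : Aff K := ⟨1, b⟩

@[simp] lemma xT_t (u : Kˣ) : (xT u : Aff K).t = u := rfl
@[simp] lemma xT_s (u : Kˣ) : (xT u : Aff K).s = 0 := rfl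
@[simp] lemma sS_t (b : K) : (sS b : Aff K).t = 1 := rfl
@[simp] lemma sS_s (b : K) : (sS b : Aff K).s = b := rfl

/-- `T ≅ k^×` as a subgroup of `TS`. -/
def xTHom : Kˣ →* Aff K where
  toFun := xT
  map_one' := rfl
  map_mul' u v := by ext <;> simp [xT]

@[simp] lemma xTHom_apply (u : Kˣ) : (xTHom u : Aff K) = xT u := rfl

lemma mul_sS (g : Aff K) (b : K) : g * sS b = sS ((g.t : K) * b) * g := by
  ext
  · simp
  · simp [add_comm]

lemma sS_mul (b : K) (g : Aff K) : sS b * g = g * sS (((g.t⁻¹ : Kˣ) : K) * b) := by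
  ext
  · simp
  · simp [Units.mul_inv_cancel_left, add_comm]

lemma aff_decomp (g : Aff K) : g = xT g.t * sS (((g.t⁻¹ : Kˣ) : K) * g.s) := by
  ext
  · simp
  · simp [Units.mul_inv_cancel_left]

instance [TopologicalSpace K] : TopologicalSpace (Aff K) :=
  TopologicalSpace.induced (fun g : Aff K => ((g.t, g.s) : Kˣ × K)) inferInstance

end Aff

/-! ### Generalities on representations of a monoid on complex vector spaces. -/

namespace GRep

variable {G : Type*} [Monoid G]

section MonoidModules

variable {V W : Type*} [AddCommMonoid V] [Module ℂ V] [AddCommMonoid W] [Module ℂ W]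

/-- A submodule invariant under the representation. -/
def Invariant (ρ : Representation ℂ G V) (U : Submodule ℂ V) : Prop :=
  ∀ (g : G) (v : V), v ∈ U → ρ g v ∈ U

/-- Equivariance of a linear map with respect to two representations. -/
def Equivariant (ρ : Representation ℂ G V) (σ : Representation ℂ G W) (f : V →ₗ[ℂ] W) : Prop :=
  ∀ (g : G) (v : V), f (ρ g v) = σ g (f v)

/-- Isomorphism of representations. -/
def Iso (ρ : Representation ℂ G V) (σ : Representation ℂ G W) : Prop :=
  ∃ e : V ≃ₗ[ℂ] W, ∀ (g : G) (v : V), e (ρ g v) = σ g (e v)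

/-- Irreducibility. -/
def Irred (ρ : Representation ℂ G V) : Prop :=
  Nontrivial V ∧ ∀ U : Submodule ℂ V, Invariant ρ U → U = ⊥ ∨ U = ⊤

/-- Subrepresentation on an invariant submodule. -/
def sub (ρ : Representation ℂ G V) {U : Submodule ℂ V} (hU : Invariant ρ U) :
    Representation ℂ G ↥U where
  toFun g := (ρ g).restrict fun v hv => hU g v hv
  map_one' := by
    apply LinearMap.ext; intro v; apply Subtype.ext
    simp [LinearMap.restrict_apply]
  map_mul' g h := by
    apply LinearMap.ext; intro v; apply Subtype.ext
    simp [LinearMap.restrict_apply]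

@[simp] lemma sub_apply (ρ : Representation ℂ G V) {U : Submodule ℂ V} (hU : Invariant ρ U)
    (g : G) (v : ↥U) : ((sub ρ hU g v : ↥U) : V) = ρ g (v : V) := rfl

lemma ker_invariant (ρ : Representation ℂ G V) (σ : Representation ℂ G W)
    (f : V →ₗ[ℂ] W) (hf : Equivariant ρ σ f) : Invariant ρ (LinearMap.ker f) := by
  intro g v hv
  rw [LinearMap.mem_ker] at hv ⊢
  rw [hf g v, hv, map_zero]

lemma range_invariant (ρ : Representation ℂ G V) (σ : Representation ℂ G W)
    (f : V →ₗ[ℂ] W) (hf : Equivariant ρ σ f) : Invariant σ (LinearMap.range f) := by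
  rintro g w ⟨v, rfl⟩
  exact ⟨ρ g v, hf g v⟩

lemma map_invariant (ρ : Representation ℂ G V) (σ : Representation ℂ G W)
    (f : V →ₗ[ℂ] W) (hf : Equivariant ρ σ f) (U : Submodule ℂ V) (hU : Invariant ρ U) :
    Invariant σ (U.map f) := by
  rintro g w ⟨v, hv, rfl⟩
  exact ⟨ρ g v, hU g v hv, hf g v⟩

end MonoidModules

section GroupModules

variable {V W : Type*} [AddCommGroup V] [Module ℂ V] [AddCommGroup W] [Module ℂ W]

/-- Quotient representation. -/
def quot (ρ : Representation ℂ G V) (U : Submodule ℂ V) (hU : Invariant ρ U) :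
    Representation ℂ G (V ⧸ U) where
  toFun g := U.mapQ U (ρ g) fun v hv => hU g v hv
  map_one' := by
    apply LinearMap.ext; intro x
    obtain ⟨v, rfl⟩ := Submodule.Quotient.mk_surjective U x
    simp [Submodule.mapQ_apply]
  map_mul' g h := by
    apply LinearMap.ext; intro x
    obtain ⟨v, rfl⟩ := Submodule.Quotient.mk_surjective U x
    simp [Submodule.mapQ_apply]

@[simp] lemma quot_apply (ρ : Representation ℂ G V) (U : Submodule ℂ V) (hU : Invariant ρ U)
    (g : G) (v : V) :
    quot ρ U hU g (Submodule.Quotient.mk v) = Submodule.Quotient.mk (ρ g v) := rfl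

/-- Subquotient representation on `B/A`. -/
def subquot (ρ : Representation ℂ G V) {A B : Submodule ℂ V}
    (hA : Invariant ρ A) (hB : Invariant ρ B) :
    Representation ℂ G (↥B ⧸ A.comap B.subtype) :=
  quot (sub ρ hB) (A.comap B.subtype) fun g v hv => hA g v.1 hv

lemma mkQ_equivariant (ρ : Representation ℂ G V) (U : Submodule ℂ V) (hU : Invariant ρ U) :
    Equivariant ρ (quot ρ U hU) U.mkQ := by
  intro g v
  show Submodule.Quotient.mk (ρ g v) = quot ρ U hU g (Submodule.Quotient.mk v)
  rw [quot_apply]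

end GroupModules

end GRep

/-! ### TS-modules: representations of the affine group. -/

/-- A `TS`-module structure on `V` is a representation of the group `TS ≅ Gl_a(1)`. -/
abbrev Rep (K : Type*) [Field K] (V : Type*) [AddCommGroup V] [Module ℂ V] :=
  Representation ℂ (Aff K) V

section RepDefs

open Aff

variable {K : Type*} [Field K]
variable {V W : Type*} [AddCommGroup V] [Module ℂ V] [AddCommGroup W] [Module ℂ W]

/-- Smoothness: every vector has open stabilizer. -/
def IsSmoothRep [TopologicalSpace K] (ρ : Rep K V) : Prop :=
  ∀ v : V, IsOpen {g : Aff K | ρ g v = v}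

/-- Smoothness of a `T`-module, i.e. of a representation of `T ≅ k^×`. -/
def TIsSmooth {X : Type*} [AddCommMonoid X] [Module ℂ X] [TopologicalSpace K]
    (τ : Representation ℂ Kˣ X) : Prop :=
  ∀ x : X, IsOpen {u : Kˣ | τ u x = x}

/-- Smooth character of `T ≅ k^×` (open kernel, equivalently locally constant). -/
def SmoothMulChar [TopologicalSpace K] (χ : Kˣ →* ℂˣ) : Prop :=
  IsOpen {u : Kˣ | χ u = 1}

/-- The space `V^S` of `S`-invariants. -/
def sInv (ρ : Rep K V) : Submodule ℂ V where
  carrier := {v | ∀ b : K, ρ (sS b) v = v}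
  zero_mem' := fun b => map_zero _
  add_mem' {a b} ha hb := fun c => by rw [map_add, ha c, hb c]
  smul_mem' c v hv := fun b => by rw [map_smul, hv b]

@[simp] lemma mem_sInv (ρ : Rep K V) (v : V) :
    v ∈ sInv ρ ↔ ∀ b : K, ρ (sS b) v = v := Iff.rfl

/-- The `χ`-eigenspace `X^{T,χ}` of a `T`-module. -/
def tEigenT {X : Type*} [AddCommMonoid X] [Module ℂ X]
    (τ : Representation ℂ Kˣ X) (χ : Kˣ →* ℂˣ) : Submodule ℂ X where
  carrier := {x | ∀ u : Kˣ, τ u x = (χ u : ℂ) • x}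
  zero_mem' := fun u => by simp
  add_mem' {a b} ha hb := fun u => by rw [map_add, ha u, hb u, smul_add]
  smul_mem' c x hx := fun u => by rw [map_smul, hx u]; exact smul_comm c ((χ u : ℂ)) x

@[simp] lemma mem_tEigenT {X : Type*} [AddCommMonoid X] [Module ℂ X]
    (τ : Representation ℂ Kˣ X) (χ : Kˣ →* ℂˣ) (x : X) :
    x ∈ tEigenT τ χ ↔ ∀ u : Kˣ, τ u x = (χ u : ℂ) • x := Iff.rfl

/-- The `χ`-eigenspace `V^{T,χ}` of a `TS`-module. -/
def tEigen (ρ : Rep K V) (χ : Kˣ →* ℂˣ) : Submodule ℂ V := tEigenT (ρ.comp xTHom) χ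

/-- The kernel of the projection to the `S`-coinvariants `V_S`. -/
def sCoinvKer (ρ : Rep K V) : Submodule ℂ V :=
  Submodule.span ℂ {w : V | ∃ (b : K) (v : V), w = ρ (sS b) v - v}

/-- The kernel of the projection to the twisted coinvariants `V_{S,ψ'}`. -/
def sTwistKer (ρ : Rep K V) (ψ' : AddChar K ℂ) : Submodule ℂ V :=
  Submodule.span ℂ {w : V | ∃ (b : K) (v : V), w = ρ (sS b) v - ψ' b • v}

/-- The kernel of the projection to the `χ`-coinvariants `X_{T,χ}` of a `T`-module. -/
def tTwistKerT {X : Type*} [AddCommGroup X] [Module ℂ X]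
    (τ : Representation ℂ Kˣ X) (χ : Kˣ →* ℂˣ) : Submodule ℂ X :=
  Submodule.span ℂ {w : X | ∃ (u : Kˣ) (x : X), w = τ u x - (χ u : ℂ) • x}

/-- The kernel of the projection to the `χ`-coinvariants `V_{T,χ}` of a `TS`-module. -/
def tTwistKer (ρ : Rep K V) (χ : Kˣ →* ℂˣ) : Submodule ℂ V := tTwistKerT (ρ.comp xTHom) χ

lemma sCoinvKer_invariant (ρ : Rep K V) : GRep.Invariant ρ (sCoinvKer ρ) := by
  intro g v hv
  have h : sCoinvKer ρ ≤ Submodule.comap (ρ g) (sCoinvKer ρ) := by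
    refine Submodule.span_le.2 ?_
    rintro w ⟨b, v', rfl⟩
    simp only [SetLike.mem_coe, Submodule.mem_comap, map_sub]
    have h1 : ρ g (ρ (sS b) v') = ρ (sS ((g.t : K) * b)) (ρ g v') := by
      rw [← Module.End.mul_apply, ← map_mul, mul_sS, map_mul, Module.End.mul_apply]
    rw [h1]
    exact Submodule.subset_span ⟨(g.t : K) * b, ρ g v', rfl⟩
  exact h hv

lemma sInv_invariant (ρ : Rep K V) : GRep.Invariant ρ (sInv ρ) := by
  intro g v hv
  rw [mem_sInv] at hv ⊢
  intro b
  have h1 : ρ (sS b) (ρ g v) = ρ g (ρ (sS (((g.t⁻¹ : Kˣ) : K) * b)) v) := by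
    rw [← Module.End.mul_apply, ← map_mul, sS_mul, map_mul, Module.End.mul_apply]
  rw [h1, hv _]

/-- The `S`-coinvariants `π₀(V) = V_S` as a `TS`-module (`S` acting trivially). -/
def piZeroRep (ρ : Rep K V) : Rep K (V ⧸ sCoinvKer ρ) :=
  GRep.quot ρ (sCoinvKer ρ) (sCoinvKer_invariant ρ)

/-- The `S`-coinvariants `π₀(V) = V_S` as a `T`-module. -/
def piZeroT (ρ : Rep K V) : Representation ℂ Kˣ (V ⧸ sCoinvKer ρ) :=
  (piZeroRep ρ).comp xTHom

/-- The `T`-module structure on `κ(V) = V^S`. -/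
def sInvT (ρ : Rep K V) : Representation ℂ Kˣ ↥(sInv ρ) :=
  (GRep.sub ρ (sInv_invariant ρ)).comp xTHom

/-- A `TS`-module is perfect if all its eigenspaces `V^{T,χ}` for smooth `χ` vanish. -/
def Perfect [TopologicalSpace K] (ρ : Rep K V) : Prop :=
  ∀ χ : Kˣ →* ℂˣ, SmoothMulChar χ → tEigen ρ χ = ⊥

/-- A finite-dimensional `T`-module is cyclic if each generalized eigenspace is a single
Jordan block; equivalently all eigenspaces `X^{T,χ}` have dimension at most one. -/
def TCyclic {X : Type*} [AddCommGroup X] [Module ℂ X]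
    (τ : Representation ℂ Kˣ X) : Prop :=
  ∀ χ : Kˣ →* ℂˣ, Module.finrank ℂ ↥(tEigenT τ χ) ≤ 1

lemma sCoinvKer_le_comap (ρ : Rep K V) (σ : Rep K W)
    (f : V →ₗ[ℂ] W) (hf : GRep.Equivariant ρ σ f) :
    sCoinvKer ρ ≤ (sCoinvKer σ).comap f := by
  refine Submodule.span_le.2 ?_
  rintro w ⟨b, v, rfl⟩
  simp only [SetLike.mem_coe, Submodule.mem_comap, map_sub]
  rw [hf]
  exact Submodule.subset_span ⟨b, f v, rfl⟩

/-- The map induced by an equivariant map on the `S`-coinvariants `π₀`. -/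
def piZeroMap (ρ : Rep K V) (σ : Rep K W) (f : V →ₗ[ℂ] W) (hf : GRep.Equivariant ρ σ f) :
    (V ⧸ sCoinvKer ρ) →ₗ[ℂ] (W ⧸ sCoinvKer σ) :=
  Submodule.mapQ _ _ f (sCoinvKer_le_comap ρ σ f hf)

lemma piZeroMap_equivariant (ρ : Rep K V) (σ : Rep K W) (f : V →ₗ[ℂ] W)
    (hf : GRep.Equivariant ρ σ f) :
    GRep.Equivariant (piZeroRep ρ) (piZeroRep σ) (piZeroMap ρ σ f hf) := by
  intro g x
  obtain ⟨v, rfl⟩ := Submodule.Quotient.mk_surjective _ x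
  show piZeroMap ρ σ f hf (piZeroRep ρ g (Submodule.Quotient.mk v))
      = piZeroRep σ g (piZeroMap ρ σ f hf (Submodule.Quotient.mk v))
  rw [show piZeroRep ρ g (Submodule.Quotient.mk v) = Submodule.Quotient.mk (ρ g v) from rfl]
  rw [show piZeroMap ρ σ f hf (Submodule.Quotient.mk v) = Submodule.Quotient.mk (f v) from rfl]
  rw [show piZeroMap ρ σ f hf (Submodule.Quotient.mk (ρ g v))
      = Submodule.Quotient.mk (f (ρ g v)) from rfl]
  rw [show piZeroRep σ g (Submodule.Quotient.mk (f v)) = Submodule.Quotient.mk (σ g (f v)) from rfl]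
  rw [hf]

lemma kappaImg_invariant (ρ : Rep K V) :
    GRep.Invariant (piZeroT ρ) ((sInv ρ).map (sCoinvKer ρ).mkQ) := by
  rintro u w ⟨v, hv, rfl⟩
  refine ⟨ρ (xT u) v, sInv_invariant ρ (xT u) v hv, ?_⟩
  rfl

end RepDefs

/-! ### Composition series and degree. -/

/-- A composition series for a `TS`-module, witnessing finite length: a maximal chain of
invariant submodules (the subquotients are then irreducible). -/
structure CompSeries {K : Type*} [Field K] {V : Type*} [AddCommGroup V] [Module ℂ V]
    (ρ : Rep K V) where
  n : ℕ
  W : ℕ → Submodule ℂ V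
  bot : W 0 = ⊥
  top : W n = ⊤
  inv : ∀ i, GRep.Invariant ρ (W i)
  lt : ∀ i < n, W i < W (i + 1)
  maximal : ∀ i < n, ∀ C : Submodule ℂ V, GRep.Invariant ρ C → W i ≤ C → C ≤ W (i + 1) →
    C = W i ∨ C = W (i + 1)

/-- The number of Jordan–Hölder constituents of a composition series isomorphic to a given
representation `σ` (applied with `σ = 𝕊`, this is the degree). -/
def CompSeries.deg {K : Type*} [Field K] {V : Type*} [AddCommGroup V] [Module ℂ V]
    {ρ : Rep K V} (c : CompSeries ρ) {W₀ : Type*} [AddCommMonoid W₀] [Module ℂ W₀]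
    (σ : Representation ℂ (Aff K) W₀) : ℕ :=
  (Finset.univ.filter fun i : Fin c.n =>
    GRep.Iso (GRep.subquot ρ (c.inv i.1) (c.inv (i.1 + 1))) σ).card

/-! ### Fiber products of a `T`-module with a `TS`-module over a `T`-module. -/

section Fiber

open Aff

variable {K : Type*} [Field K]
variable {X Y E : Type*} [AddCommGroup X] [Module ℂ X] [AddCommGroup Y] [Module ℂ Y]
  [AddCommGroup E] [Module ℂ E]

/-- The product `TS`-module `X × E` where `S` acts trivially on the `T`-module `X`. -/
def prodRepTE (τ : Representation ℂ Kˣ X) (ρ : Rep K E) : Rep K (X × E) where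
  toFun g := (τ g.t).prodMap (ρ g)
  map_one' := by
    apply LinearMap.ext; rintro ⟨x, v⟩
    simp
  map_mul' g h := by
    apply LinearMap.ext; rintro ⟨x, v⟩
    simp [map_mul]

/-- The underlying space of the fiber product `𝔼[f] = X ×_Y E`. -/
def fiberKer (f : X →ₗ[ℂ] Y) (q : E →ₗ[ℂ] Y) : Submodule ℂ (X × E) :=
  LinearMap.ker (f.comp (LinearMap.fst ℂ X E) - q.comp (LinearMap.snd ℂ X E))

lemma mem_fiberKer (f : X →ₗ[ℂ] Y) (q : E →ₗ[ℂ] Y) (p : X × E) :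
    p ∈ fiberKer f q ↔ f p.1 = q p.2 := by
  simp [fiberKer, sub_eq_zero]

lemma fiber_invariant (τX : Representation ℂ Kˣ X) (ρE : Rep K E)
    (τY : Representation ℂ Kˣ Y) (f : X →ₗ[ℂ] Y) (q : E →ₗ[ℂ] Y)
    (hf : ∀ (u : Kˣ) (x : X), f (τX u x) = τY u (f x))
    (hq : sCoinvKer ρE ≤ LinearMap.ker q)
    (hqT : ∀ (u : Kˣ) (v : E), q (ρE (xT u) v) = τY u (q v)) :
    GRep.Invariant (prodRepTE τX ρE) (fiberKer f q) := by
  intro g p hp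
  rw [mem_fiberKer] at hp ⊢
  have hsb : q (ρE (sS (((g.t⁻¹ : Kˣ) : K) * g.s)) p.2) = q p.2 := by
    have h1 : ρE (sS (((g.t⁻¹ : Kˣ) : K) * g.s)) p.2 - p.2 ∈ sCoinvKer ρE :=
      Submodule.subset_span ⟨_, _, rfl⟩
    have h2 := hq h1
    rw [LinearMap.mem_ker, map_sub, sub_eq_zero] at h2
    exact h2
  have hdecomp : ρE g p.2 = ρE (xT g.t) (ρE (sS (((g.t⁻¹ : Kˣ) : K) * g.s)) p.2) := by
    conv_lhs => rw [aff_decomp g]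
    rw [map_mul, Module.End.mul_apply]
  have h1 : ((prodRepTE τX ρE) g p).1 = τX g.t p.1 := rfl
  have h2 : ((prodRepTE τX ρE) g p).2 = ρE g p.2 := rfl
  rw [h1, h2, hf, hp, hdecomp, hqT, hsb]

end Fiber

/-! ### Jordan blocks of finite-dimensional `T`-modules. -/

section Jordan

variable {K : Type*} [Field K]
variable {X : Type*} [AddCommGroup X] [Module ℂ X]

/-- A Jordan block of a `T`-module: a nonzero indecomposable invariant direct summand. -/
def IsJordanBlock (τ : Representation ℂ Kˣ X) (J : Submodule ℂ X) : Prop :=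
  J ≠ ⊥ ∧ GRep.Invariant τ J ∧ (∃ C : Submodule ℂ X, GRep.Invariant τ C ∧ IsCompl J C) ∧
    ∀ A B : Submodule ℂ X, GRep.Invariant τ A → GRep.Invariant τ B → A ≤ J → B ≤ J →
      A ⊓ B = ⊥ → A ⊔ B = J → A = ⊥ ∨ B = ⊥

end Jordan

/-! ### Invariants and coinvariants for a normal subgroup of an arbitrary group. -/

section Grp

variable {Γ : Type*} [Group Γ]
variable {V W : Type*} [AddCommGroup V] [Module ℂ V] [AddCommGroup W] [Module ℂ W]

/-- Invariants `V^N` under a subgroup `N`. -/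
def grpInv (ρ : Representation ℂ Γ V) (N : Subgroup Γ) : Submodule ℂ V where
  carrier := {v | ∀ n ∈ N, ρ n v = v}
  zero_mem' := fun n _ => map_zero _
  add_mem' {a b} ha hb := fun n hn => by rw [map_add, ha n hn, hb n hn]
  smul_mem' c v hv := fun n hn => by rw [map_smul, hv n hn]

@[simp] lemma mem_grpInv (ρ : Representation ℂ Γ V) (N : Subgroup Γ) (v : V) :
    v ∈ grpInv ρ N ↔ ∀ n ∈ N, ρ n v = v := Iff.rfl

/-- The kernel of the projection to the coinvariants `V_N` under a subgroup `N`. -/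
def grpCoinvKer (ρ : Representation ℂ Γ V) (N : Subgroup Γ) : Submodule ℂ V :=
  Submodule.span ℂ {w : V | ∃ n ∈ N, ∃ v : V, w = ρ n v - v}

lemma grpInv_invariant (ρ : Representation ℂ Γ V) (N : Subgroup Γ) [hN : N.Normal] :
    GRep.Invariant ρ (grpInv ρ N) := by
  intro γ v hv
  rw [mem_grpInv] at hv ⊢
  intro n hn
  have hmem : γ⁻¹ * n * γ ∈ N := by
    have := hN.conj_mem n hn γ⁻¹
    simpa using this
  have key : ρ n (ρ γ v) = ρ γ (ρ (γ⁻¹ * n * γ) v) := by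
    rw [← Module.End.mul_apply, ← map_mul, ← Module.End.mul_apply, ← map_mul]
    congr 1
    group
  rw [key, hv _ hmem]

lemma grpCoinvKer_invariant (ρ : Representation ℂ Γ V) (N : Subgroup Γ) [hN : N.Normal] :
    GRep.Invariant ρ (grpCoinvKer ρ N) := by
  intro γ v hv
  have h : grpCoinvKer ρ N ≤ Submodule.comap (ρ γ) (grpCoinvKer ρ N) := by
    refine Submodule.span_le.2 ?_
    rintro w ⟨n, hn, v', rfl⟩
    simp only [SetLike.mem_coe, Submodule.mem_comap, map_sub]
    have key : ρ γ (ρ n v') = ρ (γ * n * γ⁻¹) (ρ γ v') := by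
      rw [← Module.End.mul_apply, ← map_mul, ← Module.End.mul_apply, ← map_mul]
      congr 1
      group
    rw [key]
    exact Submodule.subset_span ⟨γ * n * γ⁻¹, hN.conj_mem n hn γ, ρ γ v', rfl⟩
  exact h hv

/-- The map induced on `N`-invariants by an equivariant map. -/
def grpInvRestrict (ρ : Representation ℂ Γ V) (σ : Representation ℂ Γ W) (N : Subgroup Γ)
    (f : V →ₗ[ℂ] W) (hf : GRep.Equivariant ρ σ f) : ↥(grpInv ρ N) →ₗ[ℂ] ↥(grpInv σ N) :=
  f.restrict (fun v hv => by
    rw [mem_grpInv] at hv ⊢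
    intro n hn
    rw [← hf n v, hv n hn])

lemma grpCoinvKer_le_comap (ρ : Representation ℂ Γ V) (σ : Representation ℂ Γ W) (N : Subgroup Γ)
    (f : V →ₗ[ℂ] W) (hf : GRep.Equivariant ρ σ f) :
    grpCoinvKer ρ N ≤ (grpCoinvKer σ N).comap f := by
  refine Submodule.span_le.2 ?_
  rintro w ⟨n, hn, v, rfl⟩
  simp only [SetLike.mem_coe, Submodule.mem_comap, map_sub]
  rw [hf]
  exact Submodule.subset_span ⟨n, hn, f v, rfl⟩

/-- The map induced on `N`-coinvariants by an equivariant map. -/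
def grpCoinvMap (ρ : Representation ℂ Γ V) (σ : Representation ℂ Γ W) (N : Subgroup Γ)
    (f : V →ₗ[ℂ] W) (hf : GRep.Equivariant ρ σ f) :
    (V ⧸ grpCoinvKer ρ N) →ₗ[ℂ] (W ⧸ grpCoinvKer σ N) :=
  Submodule.mapQ _ _ f (grpCoinvKer_le_comap ρ σ N f hf)

end Grp

/-! ### Tate L-factors of finite-dimensional `T`-modules. -/

section Lfactor

variable {K : Type*} [NontriviallyNormedField K]
variable {X : Type*} [AddCommGroup X] [Module ℂ X]

/-- The part of a `T`-module where the `χ`-twisted action is unramified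
(trivial on the norm-one units). -/
def unrPart (τ : Representation ℂ Kˣ X) (χ : Kˣ →* ℂˣ) : Submodule ℂ X where
  carrier := {x | ∀ u : Kˣ, ‖(u : K)‖ = 1 → (χ u : ℂ) • τ u x = x}
  zero_mem' := fun u _ => by simp
  add_mem' {a b} ha hb := fun u hu => by rw [map_add, smul_add, ha u hu, hb u hu]
  smul_mem' c x hx := fun u hu => by
    rw [map_smul, smul_comm, hx u hu]

lemma unrPart_stable (τ : Representation ℂ Kˣ X) (χ : Kˣ →* ℂˣ) (ϖ : Kˣ) :
    ∀ x ∈ unrPart τ χ, ((χ ϖ : ℂ) • τ ϖ) x ∈ unrPart τ χ := by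
  intro x hx u hu
  have comm : τ u (τ ϖ x) = τ ϖ (τ u x) := by
    rw [← Module.End.mul_apply, ← map_mul, mul_comm, map_mul, Module.End.mul_apply]
  calc (χ u : ℂ) • τ u (((χ ϖ : ℂ) • τ ϖ) x)
      = (χ ϖ : ℂ) • ((χ u : ℂ) • τ u (τ ϖ x)) := by
        rw [LinearMap.smul_apply, map_smul, smul_comm]
    _ = (χ ϖ : ℂ) • τ ϖ ((χ u : ℂ) • τ u x) := by rw [comm, map_smul]
    _ = ((χ ϖ : ℂ) • τ ϖ) x := by rw [hx u hu, LinearMap.smul_apply]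

/-- The twisted uniformizer action on the unramified part. -/
def twistOp (τ : Representation ℂ Kˣ X) (χ : Kˣ →* ℂˣ) (ϖ : Kˣ) :
    ↥(unrPart τ χ) →ₗ[ℂ] ↥(unrPart τ χ) :=
  LinearMap.restrict ((χ ϖ : ℂ) • τ ϖ) (unrPart_stable τ χ ϖ)

/-- The Tate `L`-factor `L(s, χ ⊗ X) = det(1 - q^{-s}·(χ·τ)(ϖ) | X^{unr,χ})⁻¹` of a
(finite-dimensional) `T`-module `X`, relative to a uniformizer `ϖ`. -/
def Lfactor (τ : Representation ℂ Kˣ X) (χ : Kˣ →* ℂˣ) (ϖ : Kˣ) (s : ℂ) : ℂ :=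
  (LinearMap.det (LinearMap.id - (‖(ϖ : K)‖ : ℂ) ^ s • twistOp τ χ ϖ))⁻¹

end Lfactor

/-! ### The concrete `TS`-modules `𝕊`, `C_c^∞(k)`, `C_b^∞(k^×)` and `𝔼[χ]`. -/

section Concrete

open Aff

variable (K : Type*) [NontriviallyNormedField K]

/-- The representation of `TS` on functions on `k^×`:
`(s_b g)(x) = ψ(bx) g(x)`, `(x_λ g)(x) = g(xλ)`. -/
def repCx (ψ : AddChar K ℂ) : Rep K (Kˣ → ℂ) where
  toFun g :=
    { toFun := fun f x => ψ (g.s * (x : K)) * f (x * g.t)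
      map_add' := fun f₁ f₂ => by funext x; simp [mul_add]
      map_smul' := fun c f => by
        funext x
        simp only [Pi.smul_apply, smul_eq_mul, RingHom.id_apply]
        ring }
  map_one' := by
    apply LinearMap.ext; intro f; funext x
    simp
  map_mul' g h := by
    apply LinearMap.ext; intro f; funext x
    show ψ ((g.s + (g.t : K) * h.s) * (x : K)) * f (x * (g.t * h.t))
        = ψ (g.s * (x : K)) * (ψ (h.s * ((x * g.t : Kˣ) : K)) * f (x * g.t * h.t))
    have harg : (g.s + (g.t : K) * h.s) * (x : K)
        = g.s * (x : K) + h.s * ((x * g.t : Kˣ) : K) := by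
      push_cast
      ring
    rw [harg, AddChar.map_add_eq_mul, ← mul_assoc x g.t h.t]
    ring

@[simp] lemma repCx_apply (ψ : AddChar K ℂ) (g : Aff K) (f : Kˣ → ℂ) (x : Kˣ) :
    repCx K ψ g f x = ψ (g.s * (x : K)) * f (x * g.t) := rfl

/-- The `χ`-twisted representation of `TS` on functions on `k`:
`(s_b g)(x) = ψ(bx) g(x)`, `(x_λ g)(x) = χ(λ) g(xλ)`.  (Take `χ = 1` for the
untwisted action on `C_c^∞(k)`; the module `𝔼[χ]` is `C_c^∞(k)` with the twisted action.) -/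
def repCc (ψ : AddChar K ℂ) (χ : Kˣ →* ℂˣ) : Rep K (K → ℂ) where
  toFun g :=
    { toFun := fun f x => (χ g.t : ℂ) * ψ (g.s * x) * f (x * (g.t : K))
      map_add' := fun f₁ f₂ => by funext x; simp [mul_add]
      map_smul' := fun c f => by
        funext x
        simp only [Pi.smul_apply, smul_eq_mul, RingHom.id_apply]
        ring }
  map_one' := by
    apply LinearMap.ext; intro f; funext x
    simp
  map_mul' g h := by
    apply LinearMap.ext; intro f; funext x
    show (χ (g.t * h.t) : ℂ) * ψ ((g.s + (g.t : K) * h.s) * x) * f (x * ((g.t * h.t : Kˣ) : K))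
        = (χ g.t : ℂ) * ψ (g.s * x) * ((χ h.t : ℂ) * ψ (h.s * (x * (g.t : K)))
            * f (x * (g.t : K) * (h.t : K)))
    have harg : (g.s + (g.t : K) * h.s) * x = g.s * x + h.s * (x * (g.t : K)) := by ring
    have harg2 : x * ((g.t * h.t : Kˣ) : K) = x * (g.t : K) * (h.t : K) := by
      push_cast
      ring
    rw [harg, harg2, AddChar.map_add_eq_mul, map_mul]
    push_cast
    ring

@[simp] lemma repCc_apply (ψ : AddChar K ℂ) (χ : Kˣ →* ℂˣ) (g : Aff K) (f : K → ℂ) (x : K) :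
    repCc K ψ χ g f x = (χ g.t : ℂ) * ψ (g.s * x) * f (x * (g.t : K)) := rfl

/-- The one-dimensional `TS`-module `ℂ_χ` on which `S` acts trivially and `x_λ` by `χ(λ)`. -/
def chiRep (χ : Kˣ →* ℂˣ) : Rep K ℂ where
  toFun g := (χ g.t : ℂ) • LinearMap.id
  map_one' := by
    apply LinearMap.ext; intro c
    simp
  map_mul' g h := by
    apply LinearMap.ext; intro c
    simp only [mul_t, map_mul, LinearMap.smul_apply, LinearMap.id_apply, Module.End.mul_apply,
      Units.val_mul, smul_eq_mul]
    ring

/-- `C_c^∞(k)`: locally constant, compactly supported functions on `k`. -/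
def CcK : Submodule ℂ (K → ℂ) where
  carrier := {f | IsLocallyConstant f ∧ HasCompactSupport f}
  zero_mem' := ⟨IsLocallyConstant.const 0, by
    rw [hasCompactSupport_def]
    simp⟩
  add_mem' {a b} ha hb := ⟨ha.1.comp₂ hb.1 (· + ·), ha.2.add hb.2⟩
  smul_mem' c f hf := by
    refine ⟨?_, hf.2.mono (Function.support_const_smul_subset c f)⟩
    exact hf.1.comp (fun z => c * z)

@[simp] lemma mem_CcK (f : K → ℂ) :
    f ∈ CcK K ↔ IsLocallyConstant f ∧ HasCompactSupport f := Iff.rfl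

/-- `𝕊 = C_c^∞(k^×)`: locally constant, compactly supported functions on `k^×`. -/
def SSx : Submodule ℂ (Kˣ → ℂ) where
  carrier := {f | IsLocallyConstant f ∧ HasCompactSupport f}
  zero_mem' := ⟨IsLocallyConstant.const 0, by
    rw [hasCompactSupport_def]
    simp⟩
  add_mem' {a b} ha hb := ⟨ha.1.comp₂ hb.1 (· + ·), ha.2.add hb.2⟩
  smul_mem' c f hf := by
    refine ⟨?_, hf.2.mono (Function.support_const_smul_subset c f)⟩
    exact hf.1.comp (fun z => c * z)

@[simp] lemma mem_SSx (f : Kˣ → ℂ) :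
    f ∈ SSx K ↔ IsLocallyConstant f ∧ HasCompactSupport f := Iff.rfl

/-- `C_b^∞(k^×)`: locally constant functions on `k^×` whose support has compact closure
in `k`. -/
def Cb : Submodule ℂ (Kˣ → ℂ) where
  carrier := {f | IsLocallyConstant f ∧
    IsCompact (closure (((↑) : Kˣ → K) '' Function.support f))}
  zero_mem' := ⟨IsLocallyConstant.const 0, by simp⟩
  add_mem' {a b} ha hb := by
    refine ⟨ha.1.comp₂ hb.1 (· + ·), ?_⟩
    refine IsCompact.of_isClosed_subset (ha.2.union hb.2) isClosed_closure ?_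
    refine closure_minimal ?_ (ha.2.isClosed.union hb.2.isClosed)
    refine (Set.image_mono (Function.support_add _ _)).trans ?_
    rw [Set.image_union]
    exact Set.union_subset_union subset_closure subset_closure
  smul_mem' c f hf := by
    refine ⟨hf.1.comp (fun z => c * z), ?_⟩
    refine IsCompact.of_isClosed_subset hf.2 isClosed_closure ?_
    refine closure_mono ?_
    exact Set.image_mono (Function.support_const_smul_subset c f)

@[simp] lemma mem_Cb (f : Kˣ → ℂ) :
    f ∈ Cb K ↔ IsLocallyConstant f ∧
      IsCompact (closure (((↑) : Kˣ → K) '' Function.support f)) := Iff.rfl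

variable {K}

lemma SSx_invariant (ψ : AddChar K ℂ) (hψlc : IsLocallyConstant (⇑ψ)) :
    GRep.Invariant (repCx K ψ) (SSx K) := by
  rintro g f hf
  rw [mem_SSx] at hf ⊢
  obtain ⟨hlc, hcs⟩ := hf
  have heq : repCx K ψ g f
      = (fun x : Kˣ => ψ (g.s * (x : K))) * (f ∘ (Homeomorph.mulRight g.t)) := rfl
  constructor
  · rw [heq]
    refine IsLocallyConstant.mul ?_ ?_
    · exact hψlc.comp_continuous (continuous_const.mul Units.continuous_val)
    · exact hlc.comp_continuous (Homeomorph.mulRight g.t).continuous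
  · rw [heq]
    exact (hcs.comp_homeomorph (Homeomorph.mulRight g.t)).mul_left

lemma CcK_invariant (ψ : AddChar K ℂ) (hψlc : IsLocallyConstant (⇑ψ)) (χ : Kˣ →* ℂˣ) :
    GRep.Invariant (repCc K ψ χ) (CcK K) := by
  rintro g f hf
  rw [mem_CcK] at hf ⊢
  obtain ⟨hlc, hcs⟩ := hf
  have hne : ((g.t : Kˣ) : K) ≠ 0 := g.t.ne_zero
  have heq : repCc K ψ χ g f
      = (fun x : K => (χ g.t : ℂ) * ψ (g.s * x)) * (f ∘ (Homeomorph.mulRight₀ (g.t : K) hne)) :=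
    rfl
  constructor
  · rw [heq]
    refine IsLocallyConstant.mul ?_ ?_
    · exact ((hψlc.comp_continuous (continuous_const.mul continuous_id)).comp
        (fun z => (χ g.t : ℂ) * z))
    · exact hlc.comp_continuous (Homeomorph.mulRight₀ (g.t : K) hne).continuous
  · rw [heq]
    exact (hcs.comp_homeomorph (Homeomorph.mulRight₀ (g.t : K) hne)).mul_left

/-- The `TS`-module `𝕊 = C_c^∞(k^×)`. -/
def SRep (ψ : AddChar K ℂ) (hψlc : IsLocallyConstant (⇑ψ)) : Rep K ↥(SSx K) :=
  GRep.sub (repCx K ψ) (SSx_invariant ψ hψlc)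

/-- The `TS`-module `𝔼[χ]`, i.e. `C_c^∞(k)` with the `χ`-twisted action. -/
def ERep (ψ : AddChar K ℂ) (hψlc : IsLocallyConstant (⇑ψ)) (χ : Kˣ →* ℂˣ) : Rep K ↥(CcK K) :=
  GRep.sub (repCc K ψ χ) (CcK_invariant ψ hψlc χ)

/-- The `TS`-module `𝕊^s`, a direct sum of `s` copies of `𝕊`. -/
def SRepPow (ψ : AddChar K ℂ) (hψlc : IsLocallyConstant (⇑ψ)) (s : ℕ) :
    Rep K (Fin s → ↥(SSx K)) where
  toFun g := LinearMap.pi fun i => (SRep ψ hψlc g).comp (LinearMap.proj i)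
  map_one' := by
    apply LinearMap.ext; intro v; funext i
    simp
  map_mul' g h := by
    apply LinearMap.ext; intro v; funext i
    simp [map_mul]

/-- The submodule `E` of `C_b^∞(k^×)` consisting of functions which are `χ`-eigenvectors
modulo `𝕊`; the quotient `E/𝕊` is the `χ`-eigenspace of `C_b^∞(k^×)/𝕊`. -/
def quotEigen (ψ : AddChar K ℂ) (χ : Kˣ →* ℂˣ) : Submodule ℂ (Kˣ → ℂ) where
  carrier := {f | f ∈ Cb K ∧ ∀ u : Kˣ, repCx K ψ (Aff.xT u) f - (χ u : ℂ) • f ∈ SSx K}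
  zero_mem' := ⟨(Cb K).zero_mem, fun u => by simpa using (SSx K).zero_mem⟩
  add_mem' {a b} ha hb := by
    refine ⟨(Cb K).add_mem ha.1 hb.1, fun u => ?_⟩
    rw [map_add, smul_add, add_sub_add_comm]
    exact (SSx K).add_mem (ha.2 u) (hb.2 u)
  smul_mem' c f hf := by
    refine ⟨(Cb K).smul_mem c hf.1, fun u => ?_⟩
    rw [map_smul, smul_comm, ← smul_sub]
    exact (SSx K).smul_mem c (hf.2 u)

/-- Evaluation at `0 ∈ k`, realizing the quotient map `𝔼[χ] → ℂ_χ` with kernel `𝕊`. -/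
def ev0 : ↥(CcK K) →ₗ[ℂ] ℂ where
  toFun f := (f : K → ℂ) 0
  map_add' f g := rfl
  map_smul' c f := rfl

end Concrete

/-! ### The diagonal torus in GL(2). -/

section GL2

variable {K : Type*} [Field K]

/-- The diagonal element `diag(a, b)` of `GL(2, K)`. -/
def diagGL (a b : Kˣ) : Matrix.GeneralLinearGroup (Fin 2) K where
  val := Matrix.diagonal ![(a : K), (b : K)]
  inv := Matrix.diagonal ![((a : K))⁻¹, ((b : K))⁻¹]
  val_inv := by
    ext i j
    fin_cases i <;> fin_cases j <;>
      simp [Matrix.mul_apply, Fin.sum_univ_two, Matrix.diagonal, Matrix.one_apply,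
        a.ne_zero, b.ne_zero]
  inv_val := by
    ext i j
    fin_cases i <;> fin_cases j <;>
      simp [Matrix.mul_apply, Fin.sum_univ_two, Matrix.diagonal, Matrix.one_apply,
        a.ne_zero, b.ne_zero]

end GL2

/-!
The group algebra of `S` acts on a smooth `TS`-module through Fourier transforms, which are locally
constant functions on `k`. A vector `v` vanishes in the coinvariants for the character `ψ (a * ·)`
if and only if some element of the group algebra with nonzero transform at `a` kills `v`.
Consequently taking such coinvariants is exact, a vector which vanishes in all of them is zero, and
a submodule of `C_b^∞(k^×)` is stable under multiplication by locally constant functions on `k`.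

An irreducible module on which `S` acts nontrivially is therefore isomorphic to `𝕊`. If `M` has at
most one such constituent, the Whittaker functional `f ↦ f 1` of `𝕊` extends to `M` and yields a
morphism `Φ : M → C_b^∞(k^×)` with kernel contained in `M^S`. Since `M^S` embeds in the
finite-dimensional space `π_0(M)`, it contains a `T`-eigenvector unless it is zero; hence `Φ` is
injective when `M` is perfect. Conversely no nonzero `T`-eigenfunction has bounded support in `k`.

In a model, `v` vanishes in `π_0(M)` if and only if the function `v` is zero near `0`, so that a
`χ`-eigenvector of `π_0(M)` is the germ at `0` of a multiple of `χ`. There is at most one such line,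
and a function with this germ spans, together with `𝕊`, a copy of `𝔼[χ]`. In the other direction a
`χ`-eigenvector of `M` is `S`-invariant; if `π_0(M)` is cyclic, it would have the same image in
`π_0(M)`, up to a scalar, as a vector of a copy of `𝔼[χ]`, and then some element of the group
algebra would produce a nonzero `S`-invariant in `𝔼[χ]`, but there is none.
-/

/-! ### Group algebras and twisted coinvariants -/

section GroupAlgebra

open Representation MonoidAlgebra

variable {G : Type*} [CommMonoid G]
variable {X : Type*} [AddCommGroup X] [Module ℂ X]

/-- The algebra homomorphism `ℂ[G] → ℂ` which extends a multiplicative character `θ` of `G`. -/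
def charEval (θ : G →* ℂ) : MonoidAlgebra ℂ G →ₐ[ℂ] ℂ := MonoidAlgebra.lift ℂ ℂ G θ

lemma charEval_of (θ : G →* ℂ) (g : G) : charEval θ (of ℂ G g) = θ g :=
  MonoidAlgebra.lift_of _ _

/-- The kernel of the projection from `X` to its `θ`-coinvariants. -/
def twistKer (τ : Representation ℂ G X) (θ : G →* ℂ) : Submodule ℂ X :=
  Submodule.span ℂ {w : X | ∃ (g : G) (x : X), w = τ g x - θ g • x}

lemma asAlgebraHom_sub_mem_twistKer (τ : Representation ℂ G X) (θ : G →* ℂ)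
    (α : MonoidAlgebra ℂ G) (x : X) : asAlgebraHom τ α x - charEval θ α • x ∈ twistKer τ θ := by
  induction α using MonoidAlgebra.induction_on with
  | of g => rw [asAlgebraHom_of, charEval_of]; exact Submodule.subset_span ⟨g, x, rfl⟩
  | add a b ha hb =>
    rw [map_add, map_add, LinearMap.add_apply, add_smul, add_sub_add_comm]
    exact Submodule.add_mem _ ha hb
  | smul r a ha =>
    rw [map_smul, map_smul, LinearMap.smul_apply, smul_assoc, ← smul_sub]
    exact Submodule.smul_mem _ r ha

lemma mem_twistKer_of_asAlgebraHom_eq_zero {τ : Representation ℂ G X} {θ : G →* ℂ}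
    {α : MonoidAlgebra ℂ G} {x : X} (hα : asAlgebraHom τ α x = 0) (hθ : charEval θ α ≠ 0) :
    x ∈ twistKer τ θ := by
  have h := asAlgebraHom_sub_mem_twistKer τ θ α x
  rw [hα, zero_sub, Submodule.neg_mem_iff] at h
  exact (Submodule.smul_mem_iff _ hθ).1 h

lemma asAlgebraHom_equivariant {Y : Type*} [AddCommGroup Y] [Module ℂ Y]
    {τ : Representation ℂ G X} {σ : Representation ℂ G Y} {f : X →ₗ[ℂ] Y}
    (hf : GRep.Equivariant τ σ f) (α : MonoidAlgebra ℂ G) (x : X) :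
    f (asAlgebraHom τ α x) = asAlgebraHom σ α (f x) := by
  induction α using MonoidAlgebra.induction_on with
  | of g => rw [asAlgebraHom_of, asAlgebraHom_of, hf]
  | add a b ha hb => simp only [map_add, LinearMap.add_apply, ha, hb]
  | smul r a ha => simp only [map_smul, LinearMap.smul_apply, ha]

lemma functional_asAlgebraHom {τ : Representation ℂ G X} {θ : G →* ℂ} {l : X →ₗ[ℂ] ℂ}
    (hl : ∀ g x, l (τ g x) = θ g * l x) (α : MonoidAlgebra ℂ G) (x : X) :
    l (asAlgebraHom τ α x) = charEval θ α * l x := by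
  induction α using MonoidAlgebra.induction_on with
  | of g => rw [asAlgebraHom_of, charEval_of, hl]
  | add a b ha hb => simp only [map_add, LinearMap.add_apply, ha, hb, add_mul]
  | smul r a ha => simp only [map_smul, LinearMap.smul_apply, ha, smul_eq_mul, mul_assoc]

lemma exists_geomSum_annihilates (τ : Representation ℂ G X) (θ : G →* ℂ) {g : G} {x : X} {M : ℕ}
    (hM : M ≠ 0) (hτ : τ (g ^ M) x = x) (hθ : θ (g ^ M) = 1) :
    ∃ α, asAlgebraHom τ α (τ g x - θ g • x) = 0 ∧ charEval θ α ≠ 0 := by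
  set s := of ℂ G g
  set t := algebraMap ℂ (MonoidAlgebra ℂ G) (θ g)
  have hτs : asAlgebraHom τ s = τ g := asAlgebraHom_of τ g
  refine ⟨∑ i ∈ Finset.range M, s ^ i * t ^ (M - 1 - i), ?_, ?_⟩
  · have hsub : τ g x - θ g • x = asAlgebraHom τ (s - t) x := by
      rw [map_sub, hτs, AlgHom.commutes, LinearMap.sub_apply, Module.algebraMap_end_apply]
    rw [hsub, ← Module.End.mul_apply, ← map_mul, (Commute.all s t).geom_sum₂_mul, map_sub,
      map_pow, map_pow, hτs, AlgHom.commutes, LinearMap.sub_apply, ← map_pow, hτ, ← map_pow,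
      ← map_pow, hθ, Module.algebraMap_end_apply, one_smul, sub_self]
  · have hterm : ∀ i ∈ Finset.range M, charEval θ (s ^ i * t ^ (M - 1 - i)) = θ g ^ (M - 1) := by
      intro i hi
      rw [map_mul, map_pow, map_pow, charEval_of, AlgHom.commutes, Algebra.algebraMap_self,
        RingHom.id_apply, ← pow_add, Nat.add_sub_cancel' (by grind)]
    have hθg : θ g ≠ 0 := fun h => by simp [h, hM] at hθ
    rw [map_sum, Finset.sum_congr rfl hterm, Finset.sum_const, Finset.card_range, nsmul_eq_mul]
    exact mul_ne_zero (Nat.cast_ne_zero.2 hM) (pow_ne_zero _ hθg)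

/-- The kernels of `ℂ[G]` acting on `x` and `y` need not be comparable, but their product kills
`x + y`; it stays outside the kernel of `θ` because that kernel is prime. -/
lemma exists_annihilator_of_mem_twistKer {τ : Representation ℂ G X} {θ : G →* ℂ}
    (hfin : ∀ g x, ∃ M ≠ 0, τ (g ^ M) x = x ∧ θ (g ^ M) = 1) {x : X}
    (hx : x ∈ twistKer τ θ) : ∃ α, asAlgebraHom τ α x = 0 ∧ charEval θ α ≠ 0 := by
  induction hx using Submodule.span_induction with
  | mem w hw =>
    obtain ⟨g, x, rfl⟩ := hw
    obtain ⟨M, hM, hτ, hθ⟩ := hfin g x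
    exact exists_geomSum_annihilates τ θ hM hτ hθ
  | zero => exact ⟨1, by simp, by simp⟩
  | add x y _ _ hx hy =>
    obtain ⟨a, ha, ha'⟩ := hx
    obtain ⟨b, hb, hb'⟩ := hy
    refine ⟨a * b, ?_, by rw [map_mul]; exact mul_ne_zero ha' hb'⟩
    rw [map_add, map_mul, Module.End.mul_apply _ _ y, hb, ← map_mul, mul_comm, map_mul,
      Module.End.mul_apply, ha]
    simp
  | smul c x _ hx =>
    obtain ⟨a, ha, ha'⟩ := hx
    exact ⟨a, by rw [map_smul, ha, smul_zero], ha'⟩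

lemma asAlgebraHom_eigenvector {τ : Representation ℂ G X} {θ : G →* ℂ} {x : X}
    (hx : ∀ g, τ g x = θ g • x) (α : MonoidAlgebra ℂ G) :
    asAlgebraHom τ α x = charEval θ α • x := by
  induction α using MonoidAlgebra.induction_on with
  | of g => rw [asAlgebraHom_of, charEval_of, hx]
  | add a b ha hb => rw [map_add, map_add, LinearMap.add_apply, add_smul, ha, hb]
  | smul r a ha => rw [map_smul, map_smul, LinearMap.smul_apply, smul_assoc, ha]

/-- By Dedekind's theorem the characters `P g` are linearly independent, hence `α` pushes forward
to zero under `P`. -/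
lemma asAlgebraHom_eq_zero_of_charEval_flip_eq_zero {H : Type*} [CommMonoid H]
    (P : G →* H →* ℂ) {τ : Representation ℂ G X} {x : X}
    (hx : ∀ g g', P g = P g' → τ g x = τ g' x) {α : MonoidAlgebra ℂ G}
    (hα : ∀ h, charEval (P.flip h) α = 0) : asAlgebraHom τ α x = 0 := by
  have hP : Finsupp.mapDomain P α.coeff = 0 := by
    refine linearIndependent_iff.1 (linearIndependent_monoidHom H ℂ) _ (funext fun h => ?_)
    rw [Finsupp.linearCombination_mapDomain, Pi.zero_apply, ← hα h, charEval,
      MonoidAlgebra.lift_apply, Finsupp.linearCombination_apply, Finsupp.sum, Finset.sum_apply]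
    rfl
  have hfactor : (fun g => τ g x) = Function.extend P (fun g => τ g x) 0 ∘ P :=
    funext fun g => (Function.FactorsThrough.extend_apply (fun g g' => hx g g') 0 g).symm
  rw [asAlgebraHom_def, MonoidAlgebra.lift_apply, Finsupp.sum, LinearMap.sum_apply]
  change Finsupp.linearCombination ℂ (fun g => τ g x) α.coeff = 0
  rw [hfactor, ← Finsupp.linearCombination_mapDomain, hP, map_zero]

end GroupAlgebra

/-! ### Eigenvectors in finite-dimensional representations -/

lemma ideal_smul_top_ne_top_of_smul_eq_zero {R M : Type*} [CommRing R] [AddCommGroup M]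
    [Module R M] [Module.Finite R M] (m : Ideal R) {x : M} (hx : x ≠ 0)
    (hm : ∀ a ∈ m, a • x = 0) : m • (⊤ : Submodule R M) ≠ ⊤ := by
  intro h
  obtain ⟨r, hr, hr'⟩ :=
    Submodule.exists_mem_and_smul_eq_self_of_fg_of_le_smul m ⊤ Module.Finite.fg_top h.ge
  exact hx ((hr' x Submodule.mem_top).symm.trans (hm r hr))

/-- If the chain `m ^ n • M` stabilizes at `n`, Nakayama gives `r ∈ m` with `1 - r` killing
`m ^ n • M`; the last nonzero member of the chain `(1 - r) • m ^ k • M` is then killed by `m`. -/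
lemma exists_smul_eq_zero_of_ideal_smul_top_ne_top {R M : Type*} [CommRing R] [AddCommGroup M]
    [Module R M] [IsArtinian R M] [IsNoetherian R M] {m : Ideal R}
    (h : m • (⊤ : Submodule R M) ≠ ⊤) : ∃ x : M, x ≠ 0 ∧ ∀ a ∈ m, a • x = 0 := by
  let chain : ℕ →o (Submodule R M)ᵒᵈ :=
    ⟨fun n => OrderDual.toDual (m ^ n • ⊤),
      fun a b hab => Submodule.smul_mono_left (Ideal.pow_le_pow_right hab)⟩
  obtain ⟨n, hn⟩ := IsArtinian.monotone_stabilizes chain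
  have hstab : m ^ n • (⊤ : Submodule R M) ≤ m • m ^ n • ⊤ := by
    rw [← Submodule.mul_smul, ← pow_succ']
    exact (congrArg OrderDual.ofDual (hn (n + 1) n.le_succ)).le
  obtain ⟨r, hr, hr'⟩ := Submodule.exists_mem_and_smul_eq_self_of_fg_of_le_smul m _
    (IsNoetherian.noetherian _) hstab
  have hex : ∃ k, ∀ y ∈ m ^ k • (⊤ : Submodule R M), (1 - r) • y = 0 :=
    ⟨n, fun y hy => by rw [sub_smul, one_smul, hr' y hy, sub_self]⟩
  obtain ⟨k, hk⟩ : ∃ k, Nat.find hex = k + 1 := by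
    refine Nat.exists_eq_succ_of_ne_zero fun h0 => h (eq_top_iff.2 fun y _ => ?_)
    have hy := Nat.find_spec hex y (by simp [h0])
    rw [sub_smul, one_smul, sub_eq_zero] at hy
    exact hy ▸ Submodule.smul_mem_smul hr Submodule.mem_top
  have hmin := Nat.find_min hex (k.lt_succ_self.trans_eq hk.symm)
  push Not at hmin
  obtain ⟨y, hy, hy0⟩ := hmin
  refine ⟨(1 - r) • y, hy0, fun a ha => ?_⟩
  rw [smul_comm]
  refine Nat.find_spec hex _ ?_
  rw [hk, pow_succ', Submodule.mul_smul]
  exact Submodule.smul_mem_smul ha hy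

section FiniteDimensional

open Representation MonoidAlgebra

variable {G : Type*} [CommMonoid G]
variable {X : Type*} [AddCommGroup X] [Module ℂ X]
variable (τ : Representation ℂ G X) (θ : G →* ℂ)

lemma twistKer_eq_top_iff_ker_charEval_smul_top :
    twistKer τ θ = ⊤ ↔
      RingHom.ker (charEval θ) • (⊤ : Submodule (MonoidAlgebra ℂ G) τ.asModule) = ⊤ := by
  constructor <;> intro h <;> refine eq_top_iff.2 fun x _ => ?_
  · have hx : τ.asModuleEquiv x ∈ twistKer τ θ := h.ge Submodule.mem_top
    obtain ⟨y, rfl⟩ := τ.asModuleEquiv.symm.surjective x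
    rw [LinearEquiv.apply_symm_apply] at hx
    induction hx using Submodule.span_induction with
    | mem w hw =>
      obtain ⟨g, y, rfl⟩ := hw
      rw [map_sub, asModuleEquiv_symm_map_rho, asModuleEquiv_symm_map_smul, ← sub_smul]
      refine Submodule.smul_mem_smul ?_ Submodule.mem_top
      rw [RingHom.mem_ker, map_sub, charEval_of, AlgHom.commutes, Algebra.algebraMap_self,
        RingHom.id_apply, sub_self]
    | zero => exact Submodule.zero_mem _
    | add y z _ _ hy hz => exact Submodule.add_mem _ (hy trivial) (hz trivial)
    | smul c y _ hy =>
      rw [asModuleEquiv_symm_map_smul]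
      exact Submodule.smul_mem _ _ (hy trivial)
  · have hx : τ.asModuleEquiv.symm x ∈
        RingHom.ker (charEval θ) • (⊤ : Submodule (MonoidAlgebra ℂ G) τ.asModule) :=
      h.ge Submodule.mem_top
    refine Submodule.smul_induction_on (p := fun y => τ.asModuleEquiv y ∈ twistKer τ θ) hx
      (fun a ha y _ => ?_) fun y z hy hz => Submodule.add_mem _ hy hz
    have hmem := asAlgebraHom_sub_mem_twistKer τ θ a (τ.asModuleEquiv y)
    rwa [RingHom.mem_ker.1 ha, zero_smul, sub_zero] at hmem

variable {τ θ} in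
lemma forall_mem_ker_charEval_smul_eq_zero_iff {x : τ.asModule} :
    (∀ a ∈ RingHom.ker (charEval θ), a • x = 0) ↔
      ∀ g, τ g (τ.asModuleEquiv x) = θ g • τ.asModuleEquiv x := by
  refine ⟨fun h g => ?_, fun h a ha => ?_⟩
  · have hg := h (of ℂ G g - algebraMap ℂ _ (θ g)) (by
      rw [RingHom.mem_ker, map_sub, charEval_of, AlgHom.commutes, Algebra.algebraMap_self,
        RingHom.id_apply, sub_self])
    have hg' := congrArg τ.asModuleEquiv hg
    rwa [asModuleEquiv_map_smul, map_sub, asAlgebraHom_of, AlgHom.commutes, LinearMap.sub_apply,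
      Module.algebraMap_end_apply, map_zero, sub_eq_zero] at hg'
  · refine τ.asModuleEquiv.injective ?_
    rw [asModuleEquiv_map_smul, asAlgebraHom_eigenvector h, RingHom.mem_ker.1 ha, zero_smul,
      map_zero]

instance [Module.Finite ℂ X] : Module.Finite (MonoidAlgebra ℂ G) τ.asModule :=
  Module.Finite.of_restrictScalars_finite ℂ _ _

lemma twistKer_ne_top_iff [Module.Finite ℂ X] :
    twistKer τ θ ≠ ⊤ ↔ ∃ x : X, x ≠ 0 ∧ ∀ g, τ g x = θ g • x := by
  rw [Ne, twistKer_eq_top_iff_ker_charEval_smul_top]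
  constructor
  · intro h
    have : IsArtinian (MonoidAlgebra ℂ G) τ.asModule := isArtinian_of_tower ℂ inferInstance
    have : IsNoetherian (MonoidAlgebra ℂ G) τ.asModule := isNoetherian_of_tower ℂ inferInstance
    obtain ⟨x, hx, hx'⟩ := exists_smul_eq_zero_of_ideal_smul_top_ne_top h
    exact ⟨τ.asModuleEquiv x, fun h0 => hx (τ.asModuleEquiv.map_eq_zero_iff.1 h0),
      forall_mem_ker_charEval_smul_eq_zero_iff.1 hx'⟩
  · rintro ⟨x, hx, hx'⟩
    exact ideal_smul_top_ne_top_of_smul_eq_zero _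
      (fun h0 => hx (τ.asModuleEquiv.symm.map_eq_zero_iff.1 h0))
      (forall_mem_ker_charEval_smul_eq_zero_iff.2 hx')

/-- Schur's lemma, applied to a simple submodule. -/
lemma exists_common_eigenvector [Module.Finite ℂ X] [Nontrivial X] :
    ∃ (θ : G →* ℂ) (x : X), x ≠ 0 ∧ ∀ g, τ g x = θ g • x := by
  have : Nontrivial τ.asModule := τ.asModuleEquiv.toEquiv.nontrivial
  have : IsArtinian (MonoidAlgebra ℂ G) τ.asModule := isArtinian_of_tower ℂ inferInstance
  obtain ⟨N, hN⟩ := IsAtomic.exists_atom (Submodule (MonoidAlgebra ℂ G) τ.asModule)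
  have := isSimpleModule_iff_isAtom.2 hN
  have : FiniteDimensional ℂ N :=
    Module.Finite.of_injective (N.subtype.restrictScalars ℂ) N.subtype_injective
  obtain ⟨y, hy, hy0⟩ := N.exists_mem_ne_zero_of_ne_bot hN.1
  have hschur : ∀ g, ∃ c : ℂ, ∀ z ∈ N, of ℂ G g • z = c • z := fun g => by
    obtain ⟨c, hc⟩ := (IsSimpleModule.algebraMap_end_bijective_of_isAlgClosed ℂ
      (A := MonoidAlgebra ℂ G) (V := N)).2 (LinearMap.lsmul _ N (of ℂ G g))
    exact ⟨c, fun z hz => congrArg Subtype.val (LinearMap.congr_fun hc ⟨z, hz⟩).symm⟩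
  choose θ hθ using hschur
  refine ⟨⟨⟨θ, ?_⟩, fun g h => ?_⟩, τ.asModuleEquiv y,
    fun h0 => hy0 (τ.asModuleEquiv.map_eq_zero_iff.1 h0), fun g => ?_⟩
  · refine smul_left_injective ℂ hy0 ?_
    simp only [← hθ 1 y hy, map_one, one_smul]
  · refine smul_left_injective ℂ hy0 ?_
    change θ (g * h) • y = (θ g * θ h) • y
    rw [← hθ _ y hy, map_mul, mul_smul, hθ h y hy, smul_comm, hθ g y hy, mul_comm, mul_smul]
  · have hg := congrArg τ.asModuleEquiv (hθ g y hy)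
    rwa [asModuleEquiv_map_smul, asAlgebraHom_of] at hg

variable {τ}

lemma isSimpleModule_asModule_of_irred (hτ : GRep.Irred τ) :
    IsSimpleModule (MonoidAlgebra ℂ G) τ.asModule := by
  obtain ⟨_, hτ⟩ := hτ
  have : Nontrivial (Subrepresentation τ) :=
    ⟨⊥, ⊤, fun h => bot_ne_top (congrArg Subrepresentation.toSubmodule h)⟩
  rw [← irreducible_iff_isSimpleModule_asModule]
  refine ⟨fun U => ?_⟩
  exact (hτ U.toSubmodule fun g v hv => U.apply_mem_toSubmodule g hv).imp
    (fun h => Subrepresentation.toSubmodule_injective h)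
    (fun h => Subrepresentation.toSubmodule_injective h)

/-- The quotient of `ℂ[G]` by a maximal ideal is finite over `ℂ` by Zariski's lemma. -/
lemma finite_of_irred [Monoid.FG G] (hτ : GRep.Irred τ) : Module.Finite ℂ X := by
  have := isSimpleModule_asModule_of_irred hτ
  obtain ⟨I, hI, ⟨e⟩⟩ := isSimpleModule_iff_quot_maximal.1 this
  let _ := Ideal.Quotient.field I
  have : Module.Finite ℂ (MonoidAlgebra ℂ G ⧸ I) := finite_of_finite_type_of_isJacobsonRing ℂ _
  have : Module.Finite ℂ τ.asModule := Module.Finite.equiv (e.symm.restrictScalars ℂ)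
  exact Module.Finite.equiv τ.asModuleEquiv

end FiniteDimensional

/-! ### Fourier analysis on the field -/

section Fourier

open MonoidAlgebra

variable {K : Type*} [NontriviallyNormedField K]

/-- The Fourier transform at `x` of a finitely supported measure on `(K, +)`, that is, of an
element of the group algebra: the translation `s_b` of `K` has transform `x ↦ ψ (x * b)`. -/
def fourier (ψ : AddChar K ℂ) (x : K) : MonoidAlgebra ℂ (Multiplicative K) →ₐ[ℂ] ℂ :=
  charEval (ψ.mulShift x).toMonoidHom

lemma fourier_of (ψ : AddChar K ℂ) (x : K) (b : Multiplicative K) :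
    fourier ψ x (of ℂ _ b) = ψ (x * b.toAdd) :=
  charEval_of _ b

variable {ψ : AddChar K ℂ}

lemma isLocallyConstant_fourier (hψ : IsLocallyConstant ψ)
    (α : MonoidAlgebra ℂ (Multiplicative K)) : IsLocallyConstant fun x => fourier ψ x α := by
  induction α using MonoidAlgebra.induction_on with
  | of b =>
    simp only [fourier_of]
    exact hψ.comp_continuous (continuous_id.mul continuous_const)
  | add α β hα hβ => simpa only [map_add] using hα.comp₂ hβ (· + ·)
  | smul c α hα =>
    simp only [map_smul]
    exact hα.comp (c • ·)

lemma exists_fourier_eq_one_fourier_eq_zero (hψ : ψ ≠ 1) {x y : K} (hxy : x ≠ y) :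
    ∃ α, fourier ψ x α = 1 ∧ fourier ψ y α = 0 := by
  obtain ⟨c, hc⟩ := AddChar.ne_one_iff.1 hψ
  set b := Multiplicative.ofAdd (c / (x - y))
  have hb : ψ (x * b.toAdd) - ψ (y * b.toAdd) ≠ 0 := by
    have hsplit : x * b.toAdd = y * b.toAdd + c := by
      simp only [b, toAdd_ofAdd]
      field_simp [sub_ne_zero.2 hxy]
      ring
    rw [hsplit, AddChar.map_add_eq_mul, ← mul_sub_one]
    exact mul_ne_zero (ψ.val_isUnit _).ne_zero (sub_ne_zero.2 hc)
  refine ⟨(ψ (x * b.toAdd) - ψ (y * b.toAdd))⁻¹ •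
    (of ℂ _ b - algebraMap ℂ _ (ψ (y * b.toAdd))), ?_, ?_⟩
  · rw [map_smul, map_sub, fourier_of, AlgHom.commutes, Algebra.algebraMap_self, RingHom.id_apply,
      smul_eq_mul, inv_mul_cancel₀ hb]
  · rw [map_smul, map_sub, fourier_of, AlgHom.commutes, Algebra.algebraMap_self, RingHom.id_apply,
      sub_self, smul_zero]

variable (hψlc : IsLocallyConstant ψ) (hψ : ψ ≠ 1)
include hψlc hψ

lemma exists_fourier_eq_one_eqOn_zero {C : Set K} (hC : IsCompact C) {x : K} (hx : x ∉ C) :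
    ∃ α, fourier ψ x α = 1 ∧ ∀ y ∈ C, fourier ψ y α = 0 := by
  refine hC.induction_on (p := fun s => ∃ α, fourier ψ x α = 1 ∧ ∀ y ∈ s, fourier ψ y α = 0)
    ⟨1, map_one _, by simp⟩ ?_ ?_ fun y hy => ?_
  · rintro s t hst ⟨α, h1, h0⟩
    exact ⟨α, h1, fun y hy => h0 y (hst hy)⟩
  · rintro s t ⟨α, hα1, hα0⟩ ⟨β, hβ1, hβ0⟩
    refine ⟨α * β, by rw [map_mul, hα1, hβ1, one_mul], fun y hy => ?_⟩
    rw [map_mul, mul_eq_zero]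
    exact hy.imp (hα0 y) (hβ0 y)
  · obtain ⟨α, h1, h0⟩ := exists_fourier_eq_one_fourier_eq_zero hψ
      (ne_of_mem_of_not_mem hy hx).symm
    exact ⟨_, mem_nhdsWithin_of_mem_nhds ((isLocallyConstant_fourier hψlc α).eventually_eq y),
      α, h1, fun z hz => Eq.trans hz h0⟩

lemma exists_fourier_eqOn_one_eqOn_zero {C D : Set K} (hC : IsCompact C) (hD : IsCompact D)
    (hCD : Disjoint C D) :
    ∃ α, (∀ x ∈ D, fourier ψ x α = 1) ∧ ∀ x ∈ C, fourier ψ x α = 0 := by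
  refine hD.induction_on
    (p := fun s => ∃ α, (∀ x ∈ s, fourier ψ x α = 1) ∧ ∀ x ∈ C, fourier ψ x α = 0)
    ⟨0, by simp⟩ ?_ ?_ fun x hx => ?_
  · rintro s t hst ⟨α, h1, h0⟩
    exact ⟨α, fun x hx => h1 x (hst hx), h0⟩
  · rintro s t ⟨α, hα1, hα0⟩ ⟨β, hβ1, hβ0⟩
    refine ⟨1 - (1 - α) * (1 - β), fun x hx => ?_, fun x hx => ?_⟩
    · simp only [map_sub, map_mul, map_one, sub_eq_self, mul_eq_zero, sub_eq_zero]
      exact hx.imp (fun h => (hα1 x h).symm) fun h => (hβ1 x h).symm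
    · simp only [map_sub, map_mul, map_one, hα0 x hx, hβ0 x hx, sub_zero, mul_one, sub_self]
  · obtain ⟨α, h1, h0⟩ := exists_fourier_eq_one_eqOn_zero hψlc hψ hC (hCD.notMem_of_mem_right hx)
    exact ⟨_, mem_nhdsWithin_of_mem_nhds ((isLocallyConstant_fourier hψlc α).eventually_eq x),
      α, fun z hz => Eq.trans hz h1, h0⟩

lemma exists_fourier_eqOn {C : Set K} (hC : IsCompact C) {F : K → ℂ} (hF : IsLocallyConstant F) :
    ∃ α, ∀ x ∈ C, fourier ψ x α = F x := by
  have hfin : (F '' C).Finite := by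
    refine hC.induction_on (p := fun s => (F '' s).Finite) (by simp)
      (fun s t hst ht => ht.subset (Set.image_mono hst))
      (fun s t hs ht => by rw [Set.image_union]; exact hs.union ht) fun x _ => ?_
    exact ⟨_, mem_nhdsWithin_of_mem_nhds (hF.eventually_eq x),
      (Set.finite_singleton (F x)).subset (by rintro _ ⟨y, hy, rfl⟩; exact hy)⟩
  have hlevel : ∀ c, ∃ α, ∀ x ∈ C, fourier ψ x α = if F x = c then 1 else 0 := fun c => by
    obtain ⟨α, h1, h0⟩ := exists_fourier_eqOn_one_eqOn_zero hψlc hψ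
      (hC.inter_right (hF.isClopen_fiber c).compl.isClosed)
      (hC.inter_right (hF.isClosed_fiber c))
      (disjoint_compl_left.mono Set.inter_subset_right Set.inter_subset_right)
    refine ⟨α, fun x hx => ?_⟩
    split_ifs with hxc
    exacts [h1 x ⟨hx, hxc⟩, h0 x ⟨hx, hxc⟩]
  choose e he using hlevel
  refine ⟨∑ c ∈ hfin.toFinset, c • e c, fun x hx => ?_⟩
  rw [map_sum, Finset.sum_congr rfl fun c _ => by rw [map_smul, he c x hx]]
  simp [show F x ∈ F '' C from Set.mem_image_of_mem F hx]

end Fourier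

section Polar

variable {K : Type*} [NontriviallyNormedField K]

/-- The annihilator in the dual group of the ball of radius `ε`, when `K` is identified with its
dual by `a ↦ ψ (a * ·)`. -/
def polar (ψ : AddChar K ℂ) (ε : ℝ) : AddSubgroup K where
  carrier := {a | ∀ b, ‖b‖ < ε → ψ (a * b) = 1}
  zero_mem' b _ := by rw [zero_mul, AddChar.map_zero_eq_one]
  add_mem' ha ha' b hb := by rw [add_mul, AddChar.map_add_eq_mul, ha b hb, ha' b hb, one_mul]
  neg_mem' ha b hb := by rw [neg_mul, AddChar.map_neg_eq_inv, ha b hb, inv_one]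

variable {ψ : AddChar K ℂ} {ε : ℝ}

lemma isCompact_polar [ProperSpace K] (hψlc : IsLocallyConstant ψ) (hψ : ψ ≠ 1) (hε : 0 < ε) :
    IsCompact (polar ψ ε : Set K) := by
  obtain ⟨c, hc⟩ := AddChar.ne_one_iff.1 hψ
  refine (isCompact_closedBall (0 : K) (‖c‖ / ε)).of_isClosed_subset ?_ fun a ha => ?_
  · have hpolar : (polar ψ ε : Set K) = ⋂ (b) (_ : ‖b‖ < ε), {a | ψ (a * b) = 1} := by
      ext a
      simp [polar]
    rw [hpolar]
    exact isClosed_biInter fun b _ =>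
      (hψlc.comp_continuous (continuous_id.mul continuous_const)).isClosed_fiber 1
  · rw [mem_closedBall_zero_iff, le_div_iff₀ hε]
    by_contra! h
    have ha0 : 0 < ‖a‖ := by
      refine norm_pos_iff.2 fun h0 => ?_
      rw [h0, norm_zero, zero_mul] at h
      exact h.not_ge (norm_nonneg c)
    refine hc ?_
    rw [← mul_div_cancel₀ c (norm_pos_iff.1 ha0)]
    exact ha (c / a) (by rwa [norm_div, div_lt_iff₀ ha0, mul_comm])

lemma exists_apply_ne_one_minimal_norm [ProperSpace K] (hψlc : IsLocallyConstant ψ) (hψ : ψ ≠ 1) :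
    ∃ c, ψ c ≠ 1 ∧ ∀ x, ‖x‖ < ‖c‖ → ψ x = 1 := by
  obtain ⟨c, hc, hmin⟩ := (hψlc.isClopen_fiber 1).compl.isClosed.exists_infDist_eq_dist
    (AddChar.ne_one_iff.1 hψ) 0
  refine ⟨c, hc, fun x hx => by_contra fun hx1 => hx.not_ge ?_⟩
  have hle := Metric.infDist_le_dist_of_mem (x := (0 : K)) (s := {x | ψ x = 1}ᶜ) hx1
  rwa [hmin, dist_zero_left, dist_zero_left] at hle

lemma norm_lt_of_forall_mem_polar [ProperSpace K] (hψlc : IsLocallyConstant ψ) (hψ : ψ ≠ 1)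
    (hε : 0 < ε) {b : K} (hb : ∀ a ∈ polar ψ ε, ψ (a * b) = 1) : ‖b‖ < ε := by
  obtain ⟨c, hc, hmin⟩ := exists_apply_ne_one_minimal_norm hψlc hψ
  by_contra! hεb
  have hb0 : 0 < ‖b‖ := hε.trans_le hεb
  refine hc ?_
  rw [← div_mul_cancel₀ c (norm_pos_iff.1 hb0)]
  refine hb _ fun d hd => hmin _ ?_
  have hc0 : 0 < ‖c‖ := norm_pos_iff.2 fun h0 => hc (by rw [h0, AddChar.map_zero_eq_one])
  rw [norm_mul, norm_div, div_mul_eq_mul_div, div_lt_iff₀ hb0]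
  exact mul_lt_mul_of_pos_left (hd.trans_le hεb) hc0

/-- By compactness of the unit ball some difference of two natural numbers is small. -/
lemma exists_norm_natCast_mul_lt [IsUltrametricDist K] [ProperSpace K] (b : K) (hε : 0 < ε) :
    ∃ M : ℕ, M ≠ 0 ∧ ‖(M : K) * b‖ < ε := by
  obtain ⟨a, -, φ, hφ, hlim⟩ := (isCompact_closedBall (0 : K) 1).tendsto_subseq
    (x := fun n : ℕ => (n : K)) fun n => by
      simpa using IsUltrametricDist.norm_natCast_le_one K n
  obtain ⟨N, hN⟩ := Metric.cauchySeq_iff'.1 (hlim.mul_const b).cauchySeq ε hε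
  have hlt : φ N < φ (N + 1) := hφ N.lt_succ_self
  refine ⟨φ (N + 1) - φ N, Nat.sub_ne_zero_of_lt hlt, ?_⟩
  rw [Nat.cast_sub hlt.le, sub_mul, ← dist_eq_norm]
  exact hN (N + 1) N.le_succ

end Polar

/-! ### Smooth modules -/

section SmoothModules

open Representation Aff Topology

section Basic

variable {K : Type*} [Field K]
variable {V : Type*} [AddCommGroup V] [Module ℂ V]

lemma sS_zero : (sS 0 : Aff K) = 1 := rfl

lemma sS_add (a b : K) : sS (a + b) = sS a * sS b := by ext <;> simp

lemma eq_sS_mul_xT (g : Aff K) : g = sS g.s * xT g.t := by ext <;> simp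

/-- The subgroup `S`, written multiplicatively so that it has a group algebra. -/
def sHom : Multiplicative K →* Aff K where
  toFun b := sS b.toAdd
  map_one' := sS_zero
  map_mul' a b := sS_add a.toAdd b.toAdd

/-- The action of the group algebra of `S` on a `TS`-module. -/
def sAct (ρ : Rep K V) : MonoidAlgebra ℂ (Multiplicative K) →ₐ[ℂ] Module.End ℂ V :=
  asAlgebraHom (ρ.comp sHom)

lemma map_sAct {W : Type*} [AddCommGroup W] [Module ℂ W] {ρ : Rep K V} {σ : Rep K W}
    {f : V →ₗ[ℂ] W} (hf : GRep.Equivariant ρ σ f) (α : MonoidAlgebra ℂ (Multiplicative K)) (v : V) :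
    f (sAct ρ α v) = sAct σ α (f v) :=
  asAlgebraHom_equivariant (fun b => hf (sHom b)) α v

lemma sTwistKer_eq_twistKer (ρ : Rep K V) (ψ : AddChar K ℂ) :
    sTwistKer ρ ψ = twistKer (ρ.comp sHom) ψ.toMonoidHom := rfl

lemma sCoinvKer_eq_sTwistKer (ρ : Rep K V) : sCoinvKer ρ = sTwistKer ρ 1 := by
  simp only [sCoinvKer, sTwistKer, AddChar.one_apply, one_smul]

lemma sub_mem_sCoinvKer (ρ : Rep K V) (b : K) (v : V) : ρ (sS b) v - v ∈ sCoinvKer ρ :=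
  Submodule.subset_span ⟨b, v, rfl⟩

lemma invariant_of_sS_of_xT {ρ : Rep K V} {U : Submodule ℂ V}
    (hs : ∀ b, ∀ v ∈ U, ρ (sS b) v ∈ U) (ht : ∀ u, ∀ v ∈ U, ρ (xT u) v ∈ U) :
    GRep.Invariant ρ U := by
  intro g v hv
  rw [eq_sS_mul_xT g, map_mul, Module.End.mul_apply]
  exact hs _ _ (ht _ _ hv)

end Basic

section Topological

variable {G : Type*} [Group G] [TopologicalSpace G] [ContinuousMul G]
variable {X : Type*} [AddCommGroup X] [Module ℂ X]

lemma isOpen_stabilizer_of_mem_nhds_one {τ : Representation ℂ G X} {x : X}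
    (h : {g | τ g x = x} ∈ 𝓝 1) : IsOpen {g | τ g x = x} := by
  refine isOpen_iff_mem_nhds.2 fun g hg => ?_
  have hg1 : Filter.Tendsto (g⁻¹ * ·) (𝓝 g) (𝓝 1) := by
    simpa using (continuous_const_mul g⁻¹).tendsto g
  filter_upwards [hg1 h] with x hx
  have hx' := congrArg (τ g) hx
  rw [← Module.End.mul_apply, ← map_mul, mul_inv_cancel_left] at hx'
  exact hx'.trans hg

end Topological

variable {K : Type*} [NontriviallyNormedField K]
variable {V W : Type*} [AddCommGroup V] [Module ℂ V] [AddCommGroup W] [Module ℂ W]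

lemma continuous_sS : Continuous (sS : K → Aff K) :=
  continuous_induced_rng.2 (continuous_const.prodMk continuous_id)

lemma continuous_xT : Continuous (xT : Kˣ → Aff K) :=
  continuous_induced_rng.2 (continuous_id.prodMk continuous_const)

instance : ContinuousMul (Aff K) where
  continuous_mul := by
    have hts : Continuous fun g : Aff K => (g.t, g.s) := continuous_induced_dom
    refine continuous_induced_rng.2 ?_
    exact ((hts.fst.comp continuous_fst).mul (hts.fst.comp continuous_snd)).prodMk
      ((hts.snd.comp continuous_fst).add ((Units.continuous_val.comp
        (hts.fst.comp continuous_fst)).mul (hts.snd.comp continuous_snd)))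

lemma IsSmoothRep.of_surjective {ρ : Rep K V} (hρ : IsSmoothRep ρ) {σ : Rep K W} {f : V →ₗ[ℂ] W}
    (hf : GRep.Equivariant ρ σ f) (hsurj : Function.Surjective f) : IsSmoothRep σ := by
  intro w
  obtain ⟨v, rfl⟩ := hsurj w
  refine isOpen_stabilizer_of_mem_nhds_one ?_
  filter_upwards [(hρ v).mem_nhds (x := 1) (by simp)] with g hg
  rw [← hf, hg]

lemma IsSmoothRep.sub {ρ : Rep K V} (hρ : IsSmoothRep ρ) {U : Submodule ℂ V}
    (hU : GRep.Invariant ρ U) : IsSmoothRep (GRep.sub ρ hU) := fun v => by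
  simpa only [Subtype.ext_iff, GRep.sub_apply] using hρ v

lemma IsSmoothRep.subquot {ρ : Rep K V} (hρ : IsSmoothRep ρ) {A B : Submodule ℂ V}
    (hA : GRep.Invariant ρ A) (hB : GRep.Invariant ρ B) : IsSmoothRep (GRep.subquot ρ hA hB) :=
  (hρ.sub hB).of_surjective (GRep.mkQ_equivariant _ _ _) (Submodule.mkQ_surjective _)

lemma IsSmoothRep.comp_xTHom {ρ : Rep K V} (hρ : IsSmoothRep ρ) :
    TIsSmooth (ρ.comp xTHom) := fun v => (hρ v).preimage continuous_xT

lemma IsSmoothRep.exists_forall_norm_lt {ρ : Rep K V} (hρ : IsSmoothRep ρ) (v : V) :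
    ∃ ε > 0, ∀ b, ‖b‖ < ε → ρ (sS b) v = v := by
  obtain ⟨ε, hε, hball⟩ := Metric.isOpen_iff.1 ((hρ v).preimage continuous_sS) 0 (by simp [sS_zero])
  exact ⟨ε, hε, fun b hb => hball (mem_ball_zero_iff.2 hb)⟩

lemma exists_forall_norm_lt_mulShift {ψ : AddChar K ℂ} (hψlc : IsLocallyConstant ψ) (a : K) :
    ∃ ε > 0, ∀ b, ‖b‖ < ε → ψ (a * b) = 1 := by
  obtain ⟨ε, hε, hball⟩ := Metric.isOpen_iff.1
    ((hψlc.comp_continuous (continuous_const.mul continuous_id)).isOpen_fiber 1) (0 : K)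
    (show ψ (a * 0) = 1 by simp)
  exact ⟨ε, hε, fun b hb => hball (mem_ball_zero_iff.2 hb)⟩

section Spectrum

variable [IsUltrametricDist K] [ProperSpace K] {ψ : AddChar K ℂ} (hψlc : IsLocallyConstant ψ)
variable {ρ : Rep K V} (hρ : IsSmoothRep ρ)
include hψlc hρ

lemma mem_sTwistKer_mulShift_iff (a : K) (v : V) :
    v ∈ sTwistKer ρ (ψ.mulShift a) ↔ ∃ α, sAct ρ α v = 0 ∧ fourier ψ a α ≠ 0 := by
  rw [sTwistKer_eq_twistKer]
  refine ⟨exists_annihilator_of_mem_twistKer fun b x => ?_,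
    fun ⟨α, hα, hα'⟩ => mem_twistKer_of_asAlgebraHom_eq_zero hα hα'⟩
  obtain ⟨ε, hε, hx⟩ := hρ.exists_forall_norm_lt x
  obtain ⟨δ, hδ, ha⟩ := exists_forall_norm_lt_mulShift hψlc a
  obtain ⟨M, hM, hMb⟩ := exists_norm_natCast_mul_lt b.toAdd (lt_min hε hδ)
  rw [← nsmul_eq_mul, ← toAdd_pow] at hMb
  exact ⟨M, hM, hx _ (hMb.trans_le (min_le_left _ _)), ha _ (hMb.trans_le (min_le_right _ _))⟩

lemma mem_sCoinvKer_iff (v : V) :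
    v ∈ sCoinvKer ρ ↔ ∃ α, sAct ρ α v = 0 ∧ fourier ψ 0 α ≠ 0 := by
  rw [← mem_sTwistKer_mulShift_iff hψlc hρ, AddChar.mulShift_zero, sCoinvKer_eq_sTwistKer]

lemma exists_sAct_eq_zero_fourier_eqOn_one {v : V} {C : Set K} (hC : IsCompact C)
    (hv : ∀ a ∈ C, v ∈ sTwistKer ρ (ψ.mulShift a)) :
    ∃ α, sAct ρ α v = 0 ∧ ∀ a ∈ C, fourier ψ a α = 1 := by
  refine hC.induction_on (p := fun s => ∃ α, sAct ρ α v = 0 ∧ ∀ a ∈ s, fourier ψ a α = 1)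
    ⟨0, by simp⟩ ?_ ?_ fun a ha => ?_
  · rintro s t hst ⟨α, hα, h1⟩
    exact ⟨α, hα, fun a ha => h1 a (hst ha)⟩
  · rintro s t ⟨α, hα, hα1⟩ ⟨β, hβ, hβ1⟩
    refine ⟨α + (1 - α) * β, ?_, fun a ha => ?_⟩
    · rw [map_add, map_mul, LinearMap.add_apply, Module.End.mul_apply, hα, hβ, map_zero, add_zero]
    · rw [map_add, map_mul, map_sub, map_one]
      rcases ha with ha | ha
      · rw [hα1 a ha]; ring
      · rw [hβ1 a ha]; ring
  · obtain ⟨α, hα, hα'⟩ := (mem_sTwistKer_mulShift_iff hψlc hρ a v).1 (hv a ha)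
    refine ⟨_, mem_nhdsWithin_of_mem_nhds ((isLocallyConstant_fourier hψlc α).eventually_eq a),
      (fourier ψ a α)⁻¹ • α, ?_, fun b hb => ?_⟩
    · rw [map_smul, LinearMap.smul_apply, hα, smul_zero]
    · rw [map_smul, smul_eq_mul, show fourier ψ b α = fourier ψ a α from hb, inv_mul_cancel₀ hα']

end Spectrum

lemma sAct_of_mem_sInv {ρ : Rep K V} (ψ : AddChar K ℂ) {v : V} (hv : v ∈ sInv ρ)
    (α : MonoidAlgebra ℂ (Multiplicative K)) : sAct ρ α v = fourier ψ 0 α • v :=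
  asAlgebraHom_eigenvector (fun b => by
    rw [AddChar.mulShift_zero, MonoidHom.comp_apply]
    exact (hv b.toAdd).trans (one_smul ℂ v).symm) α

lemma mem_sCoinvKer_of_sAct_eq_zero {ρ : Rep K V} {ψ : AddChar K ℂ}
    {α : MonoidAlgebra ℂ (Multiplicative K)} {v : V} (hα : sAct ρ α v = 0)
    (h0 : fourier ψ 0 α ≠ 0) : v ∈ sCoinvKer ρ := by
  rw [sCoinvKer_eq_sTwistKer, sTwistKer_eq_twistKer, ← AddChar.mulShift_zero ψ]
  exact mem_twistKer_of_asAlgebraHom_eq_zero hα h0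

section SInv

variable [IsUltrametricDist K] [ProperSpace K] {ρ : Rep K V} (hρ : IsSmoothRep ρ)
include hρ

lemma disjoint_sInv_sCoinvKer : Disjoint (sInv ρ) (sCoinvKer ρ) := by
  refine Submodule.disjoint_def.2 fun v hv hv' => ?_
  obtain ⟨α, hα, hα'⟩ := (mem_sCoinvKer_iff (ψ := 1) (.const 1) hρ v).1 hv'
  rw [sAct_of_mem_sInv 1 hv] at hα
  exact (smul_eq_zero.1 hα).resolve_left hα'

lemma mem_sInv_of_forall_sub_mem_sInv {v : V} (hv : ∀ b, ρ (sS b) v - v ∈ sInv ρ) :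
    v ∈ sInv ρ := fun b => sub_eq_zero.1 <|
  Submodule.disjoint_def.1 (disjoint_sInv_sCoinvKer hρ) _ (hv b) (sub_mem_sCoinvKer ρ b v)

end SInv

section Separation

variable [ProperSpace K] {ψ : AddChar K ℂ} (hψlc : IsLocallyConstant ψ) (hψ : ψ ≠ 1)
variable {ρ : Rep K V} {v : V}
include hψlc hψ

lemma sAct_eq_zero_of_fourier_eqOn_polar {ε : ℝ} (hε : 0 < ε)
    (hv : ∀ b, ‖b‖ < ε → ρ (sS b) v = v) {α : MonoidAlgebra ℂ (Multiplicative K)}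
    (hα : ∀ a ∈ polar ψ ε, fourier ψ a α = 0) : sAct ρ α v = 0 := by
  let P : Multiplicative K →* Multiplicative (polar ψ ε) →* ℂ :=
    { toFun b := ((ψ.mulShift b.toAdd).compAddMonoidHom (polar ψ ε).subtype).toMonoidHom
      map_one' := by ext; simp
      map_mul' b c := by ext; simp [add_mul, AddChar.map_add_eq_mul] }
  have hP : ∀ b (a : Multiplicative (polar ψ ε)), P b a = ψ (a.toAdd * b.toAdd) := fun b a => by
    rw [mul_comm]; rfl
  refine asAlgebraHom_eq_zero_of_charEval_flip_eq_zero P (fun b c hbc => ?_) fun a => ?_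
  · have hsub : ‖b.toAdd - c.toAdd‖ < ε := by
      refine norm_lt_of_forall_mem_polar hψlc hψ hε fun a ha => ?_
      have hab := DFunLike.congr_fun hbc (Multiplicative.ofAdd ⟨a, ha⟩)
      rw [hP, hP] at hab
      rw [mul_sub, AddChar.map_sub_eq_div]
      exact (div_eq_one_iff_eq (ψ.val_isUnit _).ne_zero).2 hab
    have hb : sHom b = sHom c * sS (b.toAdd - c.toAdd) := by
      change sS _ = sS _ * sS _
      rw [← sS_add, add_sub_cancel]
    rw [MonoidHom.comp_apply, MonoidHom.comp_apply, hb, map_mul, Module.End.mul_apply, hv _ hsub]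
  · have hflip : P.flip a = (ψ.mulShift (a.toAdd : K)).toMonoidHom := by
      ext b
      exact hP b a
    rw [hflip]
    exact hα _ a.toAdd.2

variable [IsUltrametricDist K] (hρ : IsSmoothRep ρ)
include hρ

/-- The spectrum of `v` is contained in the compact set `polar ψ ε` when the ball of radius `ε`
fixes `v`, so it is enough to kill `v` by an `α` with transform `1` on that set. -/
lemma eq_zero_of_forall_mem_sTwistKer (hv : ∀ a, v ∈ sTwistKer ρ (ψ.mulShift a)) : v = 0 := by
  obtain ⟨ε, hε, hfix⟩ := hρ.exists_forall_norm_lt v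
  obtain ⟨α, hα, h1⟩ := exists_sAct_eq_zero_fourier_eqOn_one hψlc hρ
    (isCompact_polar hψlc hψ hε) fun a _ => hv a
  have h := sAct_eq_zero_of_fourier_eqOn_polar (ρ := ρ) hψlc hψ hε hfix (α := 1 - α) fun a ha => by
    rw [map_sub, map_one, h1 a ha, sub_self]
  rwa [map_sub, map_one, LinearMap.sub_apply, hα, sub_zero, Module.End.one_apply] at h

end Separation

end SmoothModules

/-! ### Functions on `k^×` -/

section Functions

open Aff Filter Topology

variable {K : Type*} [NontriviallyNormedField K] {f : Kˣ → ℂ}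

variable (K) in
/-- The filter of neighbourhoods of `0` in `k`, seen on `k^×`. -/
def atZero : Filter Kˣ := comap Units.val (𝓝 0)

lemma eventually_atZero_iff {p : Kˣ → Prop} :
    (∀ᶠ u in atZero K, p u) ↔ ∃ ε > 0, ∀ u : Kˣ, ‖(u : K)‖ < ε → p u := by
  simp only [atZero, (Metric.nhds_basis_ball.comap _).eventually_iff, Set.mem_preimage,
    mem_ball_zero_iff]

lemma mem_Cb_iff [ProperSpace K] :
    f ∈ Cb K ↔ IsLocallyConstant f ∧ ∃ R, ∀ u : Kˣ, f u ≠ 0 → ‖(u : K)‖ ≤ R := by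
  refine and_congr_right fun _ => ⟨fun h => ?_, fun ⟨R, hR⟩ => ?_⟩
  · obtain ⟨R, hR⟩ := h.isBounded.exists_norm_le
    exact ⟨R, fun u hu => hR _ (subset_closure ⟨u, hu, rfl⟩)⟩
  · refine (isCompact_closedBall (0 : K) R).of_isClosed_subset isClosed_closure ?_
    refine closure_minimal ?_ Metric.isClosed_closedBall
    rintro _ ⟨u, hu, rfl⟩
    exact mem_closedBall_zero_iff.2 (hR u hu)

lemma isCompact_annulus [ProperSpace K] {ε : ℝ} (hε : 0 < ε) (R : ℝ) :
    IsCompact {u : Kˣ | ε ≤ ‖(u : K)‖ ∧ ‖(u : K)‖ ≤ R} := by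
  have himage : Units.val '' {u : Kˣ | ε ≤ ‖(u : K)‖ ∧ ‖(u : K)‖ ≤ R} =
      {x : K | ε ≤ ‖x‖} ∩ Metric.closedBall 0 R := by
    ext x
    refine ⟨?_, fun ⟨hx, hxR⟩ => ?_⟩
    · rintro ⟨u, ⟨hu, huR⟩, rfl⟩
      exact ⟨hu, mem_closedBall_zero_iff.2 huR⟩
    · exact ⟨Units.mk0 x (norm_pos_iff.1 (hε.trans_le hx)), ⟨hx, mem_closedBall_zero_iff.1 hxR⟩,
        rfl⟩
  rw [Units.isEmbedding_val₀.isCompact_iff, himage]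
  exact (isCompact_closedBall 0 R).inter_left (isClosed_le continuous_const continuous_norm)

lemma eventually_atZero_eq_zero_of_mem_SSx (hf : f ∈ SSx K) : ∀ᶠ u in atZero K, f u = 0 := by
  have hC := hf.2.isCompact.image Units.continuous_val
  have h0 : (Units.val '' tsupport f)ᶜ ∈ 𝓝 (0 : K) :=
    hC.isClosed.isOpen_compl.mem_nhds fun ⟨u, _, hu⟩ => u.ne_zero hu
  filter_upwards [preimage_mem_comap h0] with u hu
  exact image_eq_zero_of_notMem_tsupport fun hfu => hu ⟨u, hfu, rfl⟩

lemma SSx_le_Cb : SSx K ≤ Cb K := fun _ hf =>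
  have hC := hf.2.isCompact.image Units.continuous_val
  ⟨hf.1, hC.of_isClosed_subset isClosed_closure
    (closure_minimal (Set.image_mono (subset_tsupport _)) hC.isClosed)⟩

lemma mem_SSx_of_mem_Cb [ProperSpace K] (hf : f ∈ Cb K) (h0 : ∀ᶠ u in atZero K, f u = 0) :
    f ∈ SSx K := by
  obtain ⟨hlc, R, hR⟩ := mem_Cb_iff.1 hf
  obtain ⟨ε, hε, hfε⟩ := eventually_atZero_iff.1 h0
  refine ⟨hlc, HasCompactSupport.intro (isCompact_annulus hε R) fun u hu => ?_⟩
  by_contra hne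
  exact hu ⟨le_of_not_gt fun hlt => hne (hfε u hlt), hR u hne⟩

lemma exists_isLocallyConstant_extension (hf : f ∈ SSx K) :
    ∃ F : K → ℂ, IsLocallyConstant F ∧ ∀ u : Kˣ, F u = f u := by
  have hF := Units.val_injective.extend_apply f (0 : K → ℂ)
  have hF0 : Function.extend Units.val f 0 (0 : K) = 0 :=
    Function.extend_apply' _ _ _ fun ⟨u, hu⟩ => u.ne_zero hu
  refine ⟨_, (IsLocallyConstant.iff_eventually_eq _).2 fun x => ?_, hF⟩
  rcases eq_or_ne x 0 with rfl | hx
  · filter_upwards [eventually_comap.1 (eventually_atZero_eq_zero_of_mem_SSx hf)] with y hy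
    rcases eq_or_ne y 0 with rfl | hy0
    · rfl
    · rw [hF0, ← Units.val_mk0 hy0, hF, hy _ rfl]
  · obtain ⟨u, rfl⟩ : ∃ u : Kˣ, (u : K) = x := ⟨Units.mk0 x hx, rfl⟩
    rw [← Units.isOpenEmbedding_val.map_nhds_eq, eventually_map]
    simpa only [hF] using hf.1.eventually_eq u

variable {ψ : AddChar K ℂ}

lemma sAct_repCx_apply (ψ : AddChar K ℂ) (α : MonoidAlgebra ℂ (Multiplicative K)) (f : Kˣ → ℂ)
    (u : Kˣ) : sAct (repCx K ψ) α f u = fourier ψ u α * f u := by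
  refine functional_asAlgebraHom (l := LinearMap.proj u) (fun b g => ?_) α f
  simp [sHom, mul_comm]

lemma sInv_repCx (hψ : ψ ≠ 1) : sInv (repCx K ψ) = ⊥ := by
  refine (Submodule.eq_bot_iff _).2 fun f hf => funext fun u => ?_
  obtain ⟨c, hc⟩ := AddChar.ne_one_iff.1 hψ
  have hu := congrFun (hf (c / u)) u
  rw [repCx_apply, sS_s, sS_t, mul_one, div_mul_cancel₀ _ u.ne_zero] at hu
  exact by_contra fun hfu => hc ((mul_eq_right₀ hfu).1 hu)

lemma exists_sAct_eq_zero_of_mem_SSx (hψlc : IsLocallyConstant ψ) (hψ : ψ ≠ 1)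
    (hf : f ∈ SSx K) : ∃ α, sAct (repCx K ψ) α f = 0 ∧ fourier ψ 0 α ≠ 0 := by
  obtain ⟨α, h1, h0⟩ := exists_fourier_eq_one_eqOn_zero hψlc hψ
    (hf.2.isCompact.image Units.continuous_val) (x := 0) fun ⟨u, _, hu⟩ => u.ne_zero hu
  refine ⟨α, funext fun u => ?_, h1 ▸ one_ne_zero⟩
  rw [sAct_repCx_apply, Pi.zero_apply, mul_eq_zero]
  exact or_iff_not_imp_right.2 fun hu => h0 _ ⟨u, subset_tsupport f hu, rfl⟩

variable [ProperSpace K]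

lemma eq_zero_of_mem_tEigen_repCx {χ : Kˣ →* ℂˣ} (hf : f ∈ Cb K)
    (hχ : f ∈ tEigen (repCx K ψ) χ) : f = 0 := by
  obtain ⟨-, R, hR⟩ := mem_Cb_iff.1 hf
  have hfχ : ∀ u, f u = χ u * f 1 := fun u => by
    simpa using congrFun (hχ u) 1
  obtain ⟨x, hx⟩ := NormedField.exists_lt_norm K (max R 0)
  have hfx : f (Units.mk0 x (norm_pos_iff.1 ((le_max_right _ _).trans_lt hx))) = 0 :=
    by_contra fun hne => (hR _ hne).not_gt ((le_max_left _ _).trans_lt hx)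
  have h1 : f 1 = 0 := (mul_eq_zero.1 ((hfχ _).symm.trans hfx)).resolve_left (Units.ne_zero _)
  funext u
  rw [hfχ, h1, mul_zero, Pi.zero_apply]

section LocallyConstant

variable (hψlc : IsLocallyConstant ψ)
include hψlc

lemma repCx_sS_sub_mem_SSx (hf : f ∈ Cb K) (b : K) : repCx K ψ (sS b) f - f ∈ SSx K := by
  have heq : repCx K ψ (sS b) f - f = fun u : Kˣ => (ψ (b * u) - 1) * f u := by
    funext u
    simp [sub_mul]
  obtain ⟨hlc, R, hR⟩ := mem_Cb_iff.1 hf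
  obtain ⟨ε, hε, hψε⟩ := exists_forall_norm_lt_mulShift hψlc b
  rw [heq]
  refine mem_SSx_of_mem_Cb (mem_Cb_iff.2 ⟨?_, R, fun u hu => hR u (right_ne_zero_of_mul hu)⟩)
    (eventually_atZero_iff.2 ⟨ε, hε, fun u hu => by rw [hψε _ hu, sub_self, zero_mul]⟩)
  exact (((hψlc.comp_continuous (continuous_const.mul Units.continuous_val)).sub
    (.const 1)).mul hlc :)

variable (hψ : ψ ≠ 1)
include hψ

lemma exists_sAct_repCx_eq_mul {F : K → ℂ} (hF : IsLocallyConstant F) (hf : f ∈ Cb K) :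
    ∃ α, sAct (repCx K ψ) α f = fun u : Kˣ => F u * f u := by
  obtain ⟨-, R, hR⟩ := mem_Cb_iff.1 hf
  obtain ⟨α, hα⟩ := exists_fourier_eqOn hψlc hψ (isCompact_closedBall (0 : K) R) hF
  refine ⟨α, funext fun u => ?_⟩
  rw [sAct_repCx_apply]
  rcases eq_or_ne (f u) 0 with hu | hu
  · rw [hu, mul_zero, mul_zero]
  · rw [hα u (mem_closedBall_zero_iff.2 (hR u hu))]

section Irreducible

variable {U : Submodule ℂ (Kˣ → ℂ)} (hU : GRep.Invariant (repCx K ψ) U)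
include hU

lemma mul_mem_of_invariant {h : Kˣ → ℂ} (hhU : h ∈ U) (hh : h ∈ Cb K) (hf : f ∈ SSx K) :
    f * h ∈ U := by
  obtain ⟨F, hF, hFf⟩ := exists_isLocallyConstant_extension hf
  obtain ⟨α, hα⟩ := exists_sAct_repCx_eq_mul hψlc hψ hF hh
  have hFh : f * h = sAct (repCx K ψ) α h := by
    rw [hα]
    exact funext fun u => congrArg (· * h u) (hFf u).symm
  rw [hFh]
  exact Representation.asAlgebraHom_mem_of_forall_mem (ρ := (repCx K ψ).comp sHom) U
    (fun b => hU _) h hhU α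

lemma exists_mem_eqOn_one_of_invariant (hUS : U ≤ SSx K) (hne : U ≠ ⊥) {C : Set Kˣ}
    (hC : IsCompact C) : ∃ e ∈ U, ∀ u ∈ C, e u = 1 := by
  refine hC.induction_on (p := fun s => ∃ e ∈ U, ∀ u ∈ s, e u = 1) ⟨0, U.zero_mem, by simp⟩
    ?_ ?_ fun u _ => ?_
  · rintro s t hst ⟨e, heU, he⟩
    exact ⟨e, heU, fun u hu => he u (hst hu)⟩
  · rintro s t ⟨e, heU, he⟩ ⟨e', heU', he'⟩
    have hee' := mul_mem_of_invariant hψlc hψ hU heU' (SSx_le_Cb (hUS heU')) (hUS heU)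
    refine ⟨e + e' - e * e', U.sub_mem (U.add_mem heU heU') hee', fun u hu => ?_⟩
    rcases hu with hu | hu
    · simp [he u hu]
    · simp [he' u hu]
  · obtain ⟨h, hhU, hh⟩ := Submodule.exists_mem_ne_zero_of_ne_bot hne
    obtain ⟨v, hv⟩ := Function.ne_iff.1 hh
    set g := repCx K ψ (xT (u⁻¹ * v)) h with hg
    have hgU : g ∈ U := hU _ _ hhU
    have hgu : g u ≠ 0 := by simpa [hg] using hv
    refine ⟨_, mem_nhdsWithin_of_mem_nhds ((hUS hgU).1.eventually_eq u), (g u)⁻¹ • g,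
      U.smul_mem _ hgU, fun w hw => ?_⟩
    rw [Pi.smul_apply, show g w = g u from hw, smul_eq_mul, inv_mul_cancel₀ hgu]

lemma eq_SSx_of_invariant (hUS : U ≤ SSx K) (hne : U ≠ ⊥) : U = SSx K := by
  refine le_antisymm hUS fun f hf => ?_
  obtain ⟨e, heU, he⟩ := exists_mem_eqOn_one_of_invariant hψlc hψ hU hUS hne hf.2.isCompact
  have hfe : f = f * e := funext fun u => by
    rcases eq_or_ne (f u) 0 with hu | hu
    · rw [Pi.mul_apply, hu, zero_mul]
    · rw [Pi.mul_apply, he u (subset_tsupport f hu), mul_one]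
  rw [hfe]
  exact mul_mem_of_invariant hψlc hψ hU heU (SSx_le_Cb (hUS heU)) hf

lemma SSx_le_of_invariant (hUC : U ≤ Cb K) (hne : U ≠ ⊥) : SSx K ≤ U := by
  obtain ⟨h, hhU, hh⟩ := Submodule.exists_mem_ne_zero_of_ne_bot hne
  obtain ⟨b, hb⟩ : ∃ b, repCx K ψ (sS b) h - h ≠ 0 := by
    by_contra! hinv
    have hhS : h ∈ sInv (repCx K ψ) := fun b => sub_eq_zero.1 (hinv b)
    rw [sInv_repCx hψ] at hhS
    exact hh hhS
  have hinv : GRep.Invariant (repCx K ψ) (U ⊓ SSx K) := fun g v hv =>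
    ⟨hU g v hv.1, SSx_invariant ψ hψlc g v hv.2⟩
  rw [← eq_SSx_of_invariant hψlc hψ hinv inf_le_right (Submodule.ne_bot_iff _ |>.2 ⟨_,
    ⟨U.sub_mem (hU _ _ hhU) hhU, repCx_sS_sub_mem_SSx hψlc (hUC hhU) b⟩, hb⟩)]
  exact inf_le_left

end Irreducible

end LocallyConstant

end Functions

/-! ### Kirillov maps -/

section Kirillov

open Aff Topology

variable {K : Type*} [NontriviallyNormedField K]
variable {V W : Type*} [AddCommGroup V] [Module ℂ V] [AddCommGroup W] [Module ℂ W]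

/-- `Φ` is a morphism of `TS`-modules into `C_b^∞(k^×)`. The codomain is kept as the space of all
functions, with membership in `C_b^∞(k^×)` as a separate condition. -/
structure IsKirillovMap (ρ : Rep K V) (ψ : AddChar K ℂ) (Φ : V →ₗ[ℂ] Kˣ → ℂ) : Prop where
  equivariant : GRep.Equivariant ρ (repCx K ψ) Φ
  mem_Cb : ∀ v, Φ v ∈ Cb K

lemma IsKirillovMap.range_le_Cb {ρ : Rep K V} {ψ : AddChar K ℂ} {Φ : V →ₗ[ℂ] Kˣ → ℂ}
    (hΦ : IsKirillovMap ρ ψ Φ) : LinearMap.range Φ ≤ Cb K :=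
  LinearMap.range_le_iff_comap.2 (Submodule.eq_top_iff'.2 hΦ.mem_Cb)

/-- Whittaker functionals: functionals on which `S` acts through `ψ`. -/
def IsWhittaker (ρ : Rep K V) (ψ : AddChar K ℂ) (l : V →ₗ[ℂ] ℂ) : Prop :=
  ∀ b v, l (ρ (sS b) v) = ψ b * l v

/-- The map `v ↦ (u ↦ l (x_u v))` attached to a functional `l`; it is a Kirillov map when `l` is a
Whittaker functional and the module is smooth. -/
def kirillovMap (ρ : Rep K V) (l : V →ₗ[ℂ] ℂ) : V →ₗ[ℂ] Kˣ → ℂ :=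
  LinearMap.pi fun u => l.comp (ρ (xT u))

lemma kirillovMap_apply (ρ : Rep K V) (l : V →ₗ[ℂ] ℂ) (v : V) (u : Kˣ) :
    kirillovMap ρ l v u = l (ρ (xT u) v) := rfl

lemma kirillovMap_comp {ρ : Rep K V} {σ : Rep K W} {f : V →ₗ[ℂ] W} (hf : GRep.Equivariant ρ σ f)
    (l : W →ₗ[ℂ] ℂ) (v : V) : kirillovMap ρ (l.comp f) v = kirillovMap σ l (f v) :=
  funext fun u => congrArg l (hf (xT u) v)

section Whittaker

variable {ψ : AddChar K ℂ}

lemma IsWhittaker.comp {ρ : Rep K V} {σ : Rep K W} {f : V →ₗ[ℂ] W} {l : W →ₗ[ℂ] ℂ}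
    (hl : IsWhittaker σ ψ l) (hf : GRep.Equivariant ρ σ f) : IsWhittaker ρ ψ (l.comp f) :=
  fun b v => by rw [LinearMap.comp_apply, hf, hl, LinearMap.comp_apply]

lemma xT_mul_sS (u : Kˣ) (b : K) : xT u * sS b = sS (u * b) * xT u := mul_sS (xT u) b

variable {ρ : Rep K V} {l : V →ₗ[ℂ] ℂ}

lemma IsWhittaker.equivariant_kirillovMap (hl : IsWhittaker ρ ψ l) :
    GRep.Equivariant ρ (repCx K ψ) (kirillovMap ρ l) := by
  intro g v
  funext u
  have hug : xT u * g = sS (u * g.s) * xT (u * g.t) := by ext <;> simp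
  rw [repCx_apply, kirillovMap_apply, kirillovMap_apply, ← Module.End.mul_apply, ← map_mul, hug,
    map_mul, Module.End.mul_apply, hl, mul_comm g.s]

lemma isLocallyConstant_kirillovMap (hρ : IsSmoothRep ρ) (l : V →ₗ[ℂ] ℂ) (v : V) :
    IsLocallyConstant (kirillovMap ρ l v) := by
  refine (IsLocallyConstant.iff_eventually_eq _).2 fun u => ?_
  have hu : Filter.Tendsto (u⁻¹ * ·) (𝓝 u) (𝓝 1) := by
    simpa using (continuous_const_mul u⁻¹).tendsto u
  filter_upwards [hu ((hρ.comp_xTHom v).mem_nhds (x := 1)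
    (by rw [Set.mem_ofPred_eq, map_one]; rfl))] with w hw
  have hw' : ρ (xT (u⁻¹ * w)) v = v := hw
  have huw : xT w = xT u * xT (u⁻¹ * w) := by ext <;> simp
  rw [kirillovMap_apply, huw, map_mul, Module.End.mul_apply, hw', kirillovMap_apply]

variable [ProperSpace K]

/-- If `‖c / u‖` is small then `s_{c / u}` fixes `v`, whereas it multiplies the value at `u` by
`ψ c`. -/
lemma IsWhittaker.isKirillovMap (hψ : ψ ≠ 1) (hρ : IsSmoothRep ρ) (hl : IsWhittaker ρ ψ l) :
    IsKirillovMap ρ ψ (kirillovMap ρ l) := by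
  refine ⟨hl.equivariant_kirillovMap, fun v => mem_Cb_iff.2
    ⟨isLocallyConstant_kirillovMap hρ l v, ?_⟩⟩
  obtain ⟨c, hc⟩ := AddChar.ne_one_iff.1 hψ
  obtain ⟨ε, hε, hv⟩ := hρ.exists_forall_norm_lt v
  refine ⟨‖c‖ / ε, fun u hu => le_of_not_gt fun hlt => hc ?_⟩
  have hcu : ‖c / u‖ < ε := by
    rw [norm_div, div_lt_comm₀ (norm_pos_iff.2 u.ne_zero) hε]
    exact hlt
  have h := congrFun (hl.equivariant_kirillovMap (sS (c / u)) v) u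
  rw [hv _ hcu, repCx_apply, sS_s, sS_t, mul_one, div_mul_cancel₀ _ u.ne_zero] at h
  exact (mul_eq_right₀ hu).1 h.symm

end Whittaker

section Coinvariants

variable [ProperSpace K] {ψ : AddChar K ℂ} (hψlc : IsLocallyConstant ψ)
variable {ρ : Rep K V} {Φ : V →ₗ[ℂ] Kˣ → ℂ} (hΦ : IsKirillovMap ρ ψ Φ)
include hψlc hΦ

lemma IsKirillovMap.map_mem_SSx {v : V} (hv : v ∈ sCoinvKer ρ) : Φ v ∈ SSx K := by
  have hle : sCoinvKer ρ ≤ (SSx K).comap Φ := by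
    refine Submodule.span_le.2 ?_
    rintro _ ⟨b, w, rfl⟩
    rw [SetLike.mem_coe, Submodule.mem_comap, map_sub, hΦ.equivariant]
    exact repCx_sS_sub_mem_SSx hψlc (hΦ.mem_Cb w) b
  exact hle hv

lemma IsKirillovMap.map_mem_SSx_iff (hψ : ψ ≠ 1) (hinj : Function.Injective Φ) {v : V} :
    Φ v ∈ SSx K ↔ v ∈ sCoinvKer ρ := by
  refine ⟨fun hv => ?_, hΦ.map_mem_SSx hψlc⟩
  obtain ⟨α, hα, h0⟩ := exists_sAct_eq_zero_of_mem_SSx hψlc hψ hv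
  refine mem_sCoinvKer_of_sAct_eq_zero (hinj ?_) h0
  rw [map_sAct hΦ.equivariant, hα, map_zero]

end Coinvariants

section Existence

variable [IsUltrametricDist K] [ProperSpace K] {ψ : AddChar K ℂ} (hψlc : IsLocallyConstant ψ)
variable {ρ : Rep K V} (hρ : IsSmoothRep ρ)
include hψlc hρ

/-- Taking `(S, ψ)`-coinvariants is exact on smooth modules. -/
lemma IsWhittaker.exists_extension {B : Submodule ℂ V} {hB : GRep.Invariant ρ B}
    {l₀ : B →ₗ[ℂ] ℂ} (hl₀ : IsWhittaker (GRep.sub ρ hB) ψ l₀) :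
    ∃ l, IsWhittaker ρ ψ l ∧ l.comp B.subtype = l₀ := by
  let N := sTwistKer ρ ψ
  let j : B →ₗ[ℂ] V ⧸ N := N.mkQ.comp B.subtype
  have hj : l₀ ∈ LinearMap.range j.dualMap := by
    rw [LinearMap.range_dualMap_eq_dualAnnihilator_ker, Submodule.mem_dualAnnihilator]
    intro w hw
    have hwN : (w : V) ∈ sTwistKer ρ (ψ.mulShift 1) := by
      rw [AddChar.mulShift_one]
      exact (Submodule.Quotient.mk_eq_zero N).1 hw
    obtain ⟨α, hα, h1⟩ := (mem_sTwistKer_mulShift_iff hψlc hρ 1 _).1 hwN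
    have hαw : sAct (GRep.sub ρ hB) α w = 0 := B.subtype_injective <| by
      rw [map_sAct (σ := ρ) (fun _ _ => rfl), map_zero]
      exact hα
    have hlw : l₀ (sAct (GRep.sub ρ hB) α w) = fourier ψ 1 α * l₀ w :=
      functional_asAlgebraHom (fun b x => by rw [AddChar.mulShift_one]; exact hl₀ b.toAdd x) α w
    rw [hαw, map_zero] at hlw
    exact (mul_eq_zero.1 hlw.symm).resolve_left h1
  obtain ⟨m, rfl⟩ := hj
  refine ⟨m.comp N.mkQ, fun b v => ?_, rfl⟩
  have hbv : N.mkQ (ρ (sS b) v) = ψ b • N.mkQ v := by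
    rw [← map_smul, ← sub_eq_zero, ← map_sub]
    exact (Submodule.Quotient.mk_eq_zero N).2 (Submodule.subset_span ⟨b, v, rfl⟩)
  rw [LinearMap.comp_apply, hbv, map_smul, smul_eq_mul, LinearMap.comp_apply]

lemma exists_isWhittaker_apply_ne_zero (hψ : ψ ≠ 1) {v : V} (hv : v ∈ sCoinvKer ρ) (hv0 : v ≠ 0) :
    ∃ l, IsWhittaker ρ ψ l ∧ kirillovMap ρ l v ≠ 0 := by
  obtain ⟨a, ha⟩ : ∃ a, v ∉ sTwistKer ρ (ψ.mulShift a) := by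
    by_contra! h
    exact hv0 (eq_zero_of_forall_mem_sTwistKer hψlc hψ hρ h)
  have ha0 : a ≠ 0 := by
    rintro rfl
    rw [AddChar.mulShift_zero, ← sCoinvKer_eq_sTwistKer] at ha
    exact ha hv
  lift a to Kˣ using ha0.isUnit
  obtain ⟨m, hmv, hm⟩ := Submodule.exists_dual_map_eq_bot_of_notMem ha inferInstance
  have hmψ : ∀ b w, m (ρ (sS b) w) = ψ (a * b) * m w := fun b w => by
    have h := (Submodule.mem_bot ℂ).1 (hm ▸ Submodule.mem_map_of_mem (f := m)
      (Submodule.subset_span ⟨b, w, rfl⟩ : _ ∈ sTwistKer ρ (ψ.mulShift a)))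
    rwa [map_sub, map_smul, sub_eq_zero] at h
  refine ⟨m.comp (ρ (xT a⁻¹)), fun b w => ?_, fun h => hmv ?_⟩
  · rw [LinearMap.comp_apply, ← Module.End.mul_apply, ← map_mul, xT_mul_sS, map_mul,
      Module.End.mul_apply, hmψ, Units.mul_inv_cancel_left, LinearMap.comp_apply]
  · have hva := congrFun h a
    rwa [kirillovMap_apply, LinearMap.comp_apply, ← Module.End.mul_apply, ← map_mul,
      show (xT a⁻¹ * xT a : Aff K) = 1 by ext <;> simp, map_one, Module.End.one_apply] at hva

end Existence

end Kirillov

/-! ### Irreducible modules and modules of finite length -/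

section FiniteLength

open Aff Topology

variable {K : Type*} [NontriviallyNormedField K]
variable {V : Type*} [AddCommGroup V] [Module ℂ V]

lemma sCoinvKer_eq_bot_iff {ρ : Rep K V} : sCoinvKer ρ = ⊥ ↔ ∀ b v, ρ (sS b) v = v := by
  rw [sCoinvKer, Submodule.span_eq_bot]
  exact ⟨fun h b v => sub_eq_zero.1 (h _ ⟨b, v, rfl⟩), by
    rintro h _ ⟨b, v, rfl⟩
    exact sub_eq_zero.2 (h b v)⟩

section Torus

variable {X : Type*} [AddCommGroup X] [Module ℂ X]

lemma exists_zpow_mul_mem_annulus {ϖ : Kˣ} (hϖ : ‖(ϖ : K)‖ < 1) (u : Kˣ) :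
    ∃ n : ℤ, ‖(ϖ : K)‖ ≤ ‖((ϖ ^ n * u : Kˣ) : K)‖ ∧ ‖((ϖ ^ n * u : Kˣ) : K)‖ ≤ 1 := by
  have hϖ0 : 0 < ‖(ϖ : K)‖ := norm_pos_iff.2 ϖ.ne_zero
  obtain ⟨n, hn, hn'⟩ := exists_mem_Ioc_zpow (norm_pos_iff.2 u.ne_zero) ((one_lt_inv₀ hϖ0).2 hϖ)
  have hpos : 0 < ‖(ϖ : K)‖ ^ (n + 1) := zpow_pos hϖ0 _
  rw [inv_zpow'] at hn hn'
  refine ⟨n + 1, ?_⟩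
  rw [Units.val_mul, Units.val_zpow_eq_zpow_val, norm_mul, norm_zpow]
  constructor
  · calc ‖(ϖ : K)‖ = ‖(ϖ : K)‖ ^ (n + 1) * ‖(ϖ : K)‖ ^ (-n) := by
          rw [← zpow_add₀ hϖ0.ne', add_neg_cancel_comm, zpow_one]
      _ ≤ _ := by gcongr
  · calc _ ≤ ‖(ϖ : K)‖ ^ (n + 1) * ‖(ϖ : K)‖ ^ (-(n + 1)) := by gcongr
      _ = 1 := by rw [← zpow_add₀ hϖ0.ne', add_neg_cancel, zpow_zero]

/-- The quotient is generated by an element of norm less than `1` and the finite image of a compact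
annulus. -/
lemma fg_quotient_of_isOpen [ProperSpace K] {N : Subgroup Kˣ} (hN : IsOpen (N : Set Kˣ)) :
    Group.FG (Kˣ ⧸ N) := by
  have := QuotientGroup.discreteTopology hN
  obtain ⟨x, hx0, hx1⟩ := NormedField.exists_norm_lt_one K
  let ϖ : Kˣ := Units.mk0 x (norm_pos_iff.1 hx0)
  let A : Set Kˣ := {u | ‖(ϖ : K)‖ ≤ ‖(u : K)‖ ∧ ‖(u : K)‖ ≤ 1}
  have hA : ((↑) '' A : Set (Kˣ ⧸ N)).Finite :=
    ((isCompact_annulus hx0 1).image QuotientGroup.continuous_mk).finite_of_discrete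
  refine Group.fg_iff.2 ⟨insert (ϖ : Kˣ ⧸ N) ((↑) '' A), ?_, hA.insert _⟩
  refine (Subgroup.eq_top_iff' _).2 fun q => ?_
  obtain ⟨u, rfl⟩ := QuotientGroup.mk_surjective q
  obtain ⟨n, hn⟩ := exists_zpow_mul_mem_annulus (ϖ := ϖ) hx1 u
  have hu : (u : Kˣ ⧸ N) = (ϖ : Kˣ ⧸ N) ^ (-n) * (ϖ ^ n * u : Kˣ) := by
    rw [QuotientGroup.mk_mul, QuotientGroup.mk_zpow, ← mul_assoc, ← zpow_add, neg_add_cancel,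
      zpow_zero, one_mul]
  rw [hu]
  exact mul_mem (zpow_mem (Subgroup.subset_closure (Set.mem_insert _ _)) _)
    (Subgroup.subset_closure (Set.mem_insert_of_mem _ ⟨_, hn, rfl⟩))

lemma isOpen_ker_of_irred {τ : Representation ℂ Kˣ X} (hτ : TIsSmooth τ) (hirr : GRep.Irred τ) :
    IsOpen (MonoidHom.ker τ : Set Kˣ) := by
  have := hirr.1
  obtain ⟨x, hx⟩ := exists_ne (0 : X)
  refine Subgroup.isOpen_of_mem_nhds _ (g := 1) ?_
  filter_upwards [(hτ x).mem_nhds (x := 1) (by simp)] with u hu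
  have hinv : GRep.Invariant τ (LinearMap.ker (τ u - 1)) := fun w y hy => by
    rw [LinearMap.mem_ker, LinearMap.sub_apply, Module.End.one_apply, sub_eq_zero] at hy ⊢
    rw [← Module.End.mul_apply, ← map_mul, mul_comm, map_mul, Module.End.mul_apply, hy]
  rcases hirr.2 _ hinv with h | h
  · exact absurd (LinearMap.ker_eq_bot'.1 h x (sub_eq_zero.2 hu)) hx
  · exact sub_eq_zero.1 (LinearMap.ker_eq_top.1 h)

lemma finite_of_irred_of_tIsSmooth [ProperSpace K] {τ : Representation ℂ Kˣ X} (hτ : TIsSmooth τ)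
    (hirr : GRep.Irred τ) : Module.Finite ℂ X := by
  have := fg_quotient_of_isOpen (isOpen_ker_of_irred hτ hirr)
  let τ' : Representation ℂ (Kˣ ⧸ MonoidHom.ker τ) X := QuotientGroup.lift _ τ fun _ => id
  have hirr' : GRep.Irred τ' := ⟨hirr.1, fun U hU => hirr.2 U fun u => hU (u : Kˣ ⧸ _)⟩
  exact finite_of_irred (G := Kˣ ⧸ MonoidHom.ker τ) hirr'

end Torus

section Irreducible

variable [ProperSpace K] {σ : Rep K V} (hσ : IsSmoothRep σ)
variable (hirr : GRep.Irred σ)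
include hσ hirr

lemma finite_coinvariants_of_irred : Module.Finite ℂ (V ⧸ sCoinvKer σ) := by
  rcases hirr.2 _ (sCoinvKer_invariant σ) with h | h
  · have hT : GRep.Irred (σ.comp xTHom) := ⟨hirr.1, fun U hU => hirr.2 U <|
      invariant_of_sS_of_xT (fun b v hv => (sCoinvKer_eq_bot_iff.1 h b v).symm ▸ hv) hU⟩
    have := finite_of_irred_of_tIsSmooth hσ.comp_xTHom hT
    infer_instance
  · have := Submodule.Quotient.subsingleton_iff.2 h
    infer_instance

variable [IsUltrametricDist K] {ψ : AddChar K ℂ} (hψlc : IsLocallyConstant ψ) (hψ : ψ ≠ 1)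
variable (hS : sCoinvKer σ ≠ ⊥)
include hψlc hψ hS

lemma exists_isWhittaker_injective_of_irred :
    ∃ l, IsWhittaker σ ψ l ∧ Function.Injective (kirillovMap σ l) := by
  obtain ⟨v, hv, hv0⟩ := Submodule.exists_mem_ne_zero_of_ne_bot hS
  obtain ⟨l, hl, hlv⟩ := exists_isWhittaker_apply_ne_zero hψlc hσ hψ hv hv0
  refine ⟨l, hl, LinearMap.ker_eq_bot.1 ?_⟩
  refine (hirr.2 _ (GRep.ker_invariant _ _ _ hl.equivariant_kirillovMap)).resolve_right fun h => ?_
  exact hlv (LinearMap.mem_ker.1 (h ▸ Submodule.mem_top))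

lemma iso_SRep_of_irred : GRep.Iso σ (SRep ψ hψlc) := by
  obtain ⟨l, hl, hinj⟩ := exists_isWhittaker_injective_of_irred hσ hirr hψlc hψ hS
  have hΦ := hl.isKirillovMap hψ hσ
  have htop := (hirr.2 _ (sCoinvKer_invariant σ)).resolve_left hS
  have hmem : ∀ v, kirillovMap σ l v ∈ SSx K := fun v => hΦ.map_mem_SSx hψlc (htop ▸ trivial)
  have := hirr.1
  have hrange : LinearMap.range (kirillovMap σ l) = SSx K := by
    refine eq_SSx_of_invariant hψlc hψ (GRep.range_invariant _ _ _ hΦ.equivariant) ?_ ?_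
    · rintro _ ⟨v, rfl⟩
      exact hmem v
    · obtain ⟨v, hv⟩ := exists_ne (0 : V)
      exact Submodule.ne_bot_iff _ |>.2 ⟨_, ⟨v, rfl⟩, (map_ne_zero_iff _ hinj).2 hv⟩
  exact ⟨(LinearEquiv.ofInjective _ hinj).trans (LinearEquiv.ofEq _ _ hrange),
    fun g v => Subtype.ext (hΦ.equivariant g v)⟩

end Irreducible

namespace CompSeries

variable {ρ : Rep K V} (c : CompSeries ρ)

lemma irred_subquot {i : ℕ} (hi : i < c.n) :
    GRep.Irred (GRep.subquot ρ (c.inv i) (c.inv (i + 1))) := by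
  let A := (c.W i).comap (c.W (i + 1)).subtype
  refine ⟨?_, fun U hU => ?_⟩
  · rw [Submodule.Quotient.nontrivial_iff, Ne, Submodule.comap_subtype_eq_top]
    exact (c.lt i hi).not_ge
  let C : Submodule ℂ V := (U.comap A.mkQ).map (c.W (i + 1)).subtype
  have hC : GRep.Invariant ρ C := by
    rintro g _ ⟨w, hw, rfl⟩
    exact ⟨GRep.sub ρ (c.inv (i + 1)) g w, hU g _ hw, rfl⟩
  have hWC : c.W i ≤ C := fun w hw => by
    refine ⟨⟨w, (c.lt i hi).le hw⟩, ?_, rfl⟩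
    rw [SetLike.mem_coe, Submodule.mem_comap, Submodule.mkQ_apply,
      (Submodule.Quotient.mk_eq_zero A).2 (show _ ∈ c.W i from hw)]
    exact U.zero_mem
  have hmem : ∀ w : c.W (i + 1), A.mkQ w ∈ U ↔ (w : V) ∈ C := fun w =>
    ((c.W (i + 1)).subtype_injective.mem_set_image (s := U.comap A.mkQ)).symm
  refine (c.maximal i hi C hC hWC (Submodule.map_subtype_le _ _)).imp (fun h => ?_) fun h => ?_
  · refine (Submodule.eq_bot_iff _).2 fun q hq => ?_
    obtain ⟨w, rfl⟩ := A.mkQ_surjective q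
    exact (Submodule.Quotient.mk_eq_zero A).2 (h.le ((hmem w).1 hq))
  · refine (Submodule.eq_top_iff').2 fun q => ?_
    obtain ⟨w, rfl⟩ := A.mkQ_surjective q
    exact (hmem w).2 (h.ge w.2)

end CompSeries

lemma fg_range_of_forall_sS {X : Type*} [AddCommGroup X] [Module ℂ X] {ρ : Rep K V}
    [Module.Finite ℂ (V ⧸ sCoinvKer ρ)] {f : V →ₗ[ℂ] X} (hf : ∀ b v, f (ρ (sS b) v) = f v) :
    (LinearMap.range f).FG := by
  have hle : sCoinvKer ρ ≤ LinearMap.ker f := by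
    refine Submodule.span_le.2 ?_
    rintro _ ⟨b, v, rfl⟩
    exact LinearMap.sub_mem_ker_iff.2 (hf b v)
  rw [← Submodule.range_liftQ _ f hle]
  exact Module.Finite.iff_fg.1 inferInstance

variable [ProperSpace K] {ρ : Rep K V} (hρ : IsSmoothRep ρ)
variable (c : CompSeries ρ)
include hρ c

lemma CompSeries.fg_map_mkQ {i : ℕ} (hi : i ≤ c.n) : ((c.W i).map (sCoinvKer ρ).mkQ).FG := by
  induction i with
  | zero => rw [c.bot, Submodule.map_bot]; exact Submodule.fg_bot
  | succ i ih =>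
    let A := (c.W i).comap (c.W (i + 1)).subtype
    let P := (c.W i).map (sCoinvKer ρ).mkQ
    let f := P.mkQ ∘ₗ (sCoinvKer ρ).mkQ ∘ₗ (c.W (i + 1)).subtype
    have hA : A ≤ LinearMap.ker f := fun w hw => (Submodule.Quotient.mk_eq_zero P).2 ⟨w, hw, rfl⟩
    have := finite_coinvariants_of_irred (hρ.subquot (c.inv i) (c.inv (i + 1))) (c.irred_subquot hi)
    have hfg := fg_range_of_forall_sS (ρ := GRep.subquot ρ (c.inv i) (c.inv (i + 1)))
      (f := A.liftQ f hA) fun b q => by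
        obtain ⟨w, rfl⟩ := A.mkQ_surjective q
        exact congrArg P.mkQ ((Submodule.Quotient.eq _).2 (sub_mem_sCoinvKer ρ b w))
    refine Submodule.fg_of_fg_map_of_fg_inf_ker P.mkQ ?_ ?_
    · rwa [Submodule.range_liftQ, LinearMap.range_comp, LinearMap.range_comp,
        Submodule.range_subtype] at hfg
    · rw [Submodule.ker_mkQ, inf_eq_right.2 (Submodule.map_mono (c.lt i hi).le)]
      exact ih (Nat.le_of_succ_le hi)

lemma finite_coinvariants : Module.Finite ℂ (V ⧸ sCoinvKer ρ) := by
  have h := c.fg_map_mkQ hρ le_rfl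
  rw [c.top, Submodule.map_top, Submodule.range_mkQ] at h
  exact ⟨h⟩

end FiniteLength

/-! ### Modules of degree at most one -/

section Degree

open Aff

variable {K : Type*} [NontriviallyNormedField K]
variable {V : Type*} [AddCommGroup V] [Module ℂ V] {ρ : Rep K V}

lemma CompSeries.ker_le_sInv [IsUltrametricDist K] [ProperSpace K]
    {W : Type*} [AddCommGroup W] [Module ℂ W] {τ : Rep K W} (hρ : IsSmoothRep ρ)
    (c : CompSeries ρ) {Φ : V →ₗ[ℂ] W} (hΦ : GRep.Equivariant ρ τ Φ)
    (h : ∀ i < c.n, sCoinvKer (GRep.subquot ρ (c.inv i) (c.inv (i + 1))) = ⊥ ∨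
      LinearMap.ker Φ ⊓ c.W (i + 1) ≤ c.W i) :
    LinearMap.ker Φ ≤ sInv ρ := by
  suffices ∀ i ≤ c.n, LinearMap.ker Φ ⊓ c.W i ≤ sInv ρ by
    simpa only [c.top, inf_top_eq] using this c.n le_rfl
  intro i hi
  induction i with
  | zero => rw [c.bot, inf_bot_eq]; exact bot_le
  | succ i ih =>
    rintro v ⟨hv0, hv⟩
    replace ih := ih (Nat.le_of_succ_le hi)
    rcases h i hi with hS | hker
    · refine mem_sInv_of_forall_sub_mem_sInv hρ fun b => ih ⟨?_, ?_⟩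
      · exact sub_mem (GRep.ker_invariant _ _ _ hΦ (sS b) v hv0) hv0
      · have hb := sCoinvKer_eq_bot_iff.1 hS b (Submodule.Quotient.mk ⟨v, hv⟩)
        exact (Submodule.Quotient.eq ((c.W i).comap (c.W (i + 1)).subtype)).1 hb
    · exact ih ⟨hv0, hker ⟨hv0, hv⟩⟩

section DegreeLeOne

variable [IsUltrametricDist K] [ProperSpace K]
variable {ψ : AddChar K ℂ} (hψlc : IsLocallyConstant ψ) (hψ : ψ ≠ 1) (hρ : IsSmoothRep ρ)
include hψlc hψ hρ

lemma CompSeries.eq_of_deg_le_one (c : CompSeries ρ) (hdeg : c.deg (SRep ψ hψlc) ≤ 1) {i j : ℕ}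
    (hi : i < c.n) (hj : j < c.n)
    (hSi : sCoinvKer (GRep.subquot ρ (c.inv i) (c.inv (i + 1))) ≠ ⊥)
    (hSj : sCoinvKer (GRep.subquot ρ (c.inv j) (c.inv (j + 1))) ≠ ⊥) : i = j := by
  have hmem : ∀ (k : ℕ) (hk : k < c.n),
      sCoinvKer (GRep.subquot ρ (c.inv k) (c.inv (k + 1))) ≠ ⊥ →
      (⟨k, hk⟩ : Fin c.n) ∈ Finset.univ.filter fun i : Fin c.n =>
        GRep.Iso (GRep.subquot ρ (c.inv i) (c.inv (i + 1))) (SRep ψ hψlc) := fun k hk hSk =>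
    Finset.mem_filter.2 ⟨Finset.mem_univ _,
      iso_SRep_of_irred (hρ.subquot _ _) (c.irred_subquot hk) hψlc hψ hSk⟩
  exact congrArg Fin.val (Finset.card_le_one.1 hdeg _ (hmem i hi hSi) _ (hmem j hj hSj))

lemma exists_isWhittaker_ker_inf_le {A B : Submodule ℂ V} (hA : GRep.Invariant ρ A)
    (hB : GRep.Invariant ρ B) (hirr : GRep.Irred (GRep.subquot ρ hA hB))
    (hS : sCoinvKer (GRep.subquot ρ hA hB) ≠ ⊥) :
    ∃ l, IsWhittaker ρ ψ l ∧ LinearMap.ker (kirillovMap ρ l) ⊓ B ≤ A := by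
  obtain ⟨m, hm, hinj⟩ := exists_isWhittaker_injective_of_irred (hρ.subquot hA hB) hirr hψlc hψ hS
  have hq : GRep.Equivariant (GRep.sub ρ hB) (GRep.subquot ρ hA hB)
      (A.comap B.subtype).mkQ := fun _ _ => rfl
  obtain ⟨l, hl, hlm⟩ := (hm.comp hq).exists_extension hψlc hρ
  refine ⟨l, hl, fun v ⟨hv0, hv⟩ => ?_⟩
  have hker : kirillovMap (GRep.subquot ρ hA hB) m ((A.comap B.subtype).mkQ ⟨v, hv⟩) = 0 := by
    rw [← kirillovMap_comp hq, ← hlm, kirillovMap_comp (σ := ρ) fun _ _ => rfl]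
    exact hv0
  exact (Submodule.Quotient.mk_eq_zero (A.comap B.subtype)).1 ((map_eq_zero_iff _ hinj).1 hker)

lemma CompSeries.exists_isKirillovMap_ker_le_sInv (c : CompSeries ρ)
    (hdeg : c.deg (SRep ψ hψlc) ≤ 1) :
    ∃ Φ, IsKirillovMap ρ ψ Φ ∧ LinearMap.ker Φ ≤ sInv ρ := by
  by_cases h : ∃ i < c.n, sCoinvKer (GRep.subquot ρ (c.inv i) (c.inv (i + 1))) ≠ ⊥
  · obtain ⟨i, hi, hSi⟩ := h
    obtain ⟨l, hl, hker⟩ :=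
      exists_isWhittaker_ker_inf_le hψlc hψ hρ _ _ (c.irred_subquot hi) hSi
    refine ⟨_, hl.isKirillovMap hψ hρ, c.ker_le_sInv hρ hl.equivariant_kirillovMap fun j hj => ?_⟩
    refine or_iff_not_imp_left.2 fun hSj => ?_
    obtain rfl := c.eq_of_deg_le_one hψlc hψ hρ hdeg hi hj hSi hSj
    exact hker
  · push Not at h
    have h0 : IsKirillovMap ρ ψ 0 := ⟨fun _ _ => (map_zero _).symm, fun _ => (Cb K).zero_mem⟩
    exact ⟨0, h0, c.ker_le_sInv hρ h0.equivariant fun i hi => Or.inl (h i hi)⟩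

end DegreeLeOne

lemma tEigen_ne_bot_of_eigenvector {v : V} (hρ : IsSmoothRep ρ) (hv : v ≠ 0) {θ : Kˣ →* ℂ}
    (hθ : ∀ u, ρ (xT u) v = θ u • v) : ∃ χ, SmoothMulChar χ ∧ tEigen ρ χ ≠ ⊥ := by
  refine ⟨θ.toHomUnits, ?_, (Submodule.ne_bot_iff _).2 ⟨v, hθ, hv⟩⟩
  have hstab : {u : Kˣ | θ.toHomUnits u = 1} = {u | ρ (xT u) v = v} := by
    ext u
    rw [Set.mem_ofPred_eq, Set.mem_ofPred_eq, hθ, Units.ext_iff, MonoidHom.coe_toHomUnits,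
      Units.val_one, ← (smul_left_injective ℂ hv).eq_iff, one_smul]
  rw [SmoothMulChar, hstab]
  exact hρ.comp_xTHom v

lemma Perfect.sInv_eq_bot [IsUltrametricDist K] [ProperSpace K] (hρ : IsSmoothRep ρ)
    [Module.Finite ℂ (V ⧸ sCoinvKer ρ)] (hp : Perfect ρ) : sInv ρ = ⊥ := by
  by_contra hne
  have hinj : Function.Injective ((sCoinvKer ρ).mkQ.comp (sInv ρ).subtype) := by
    rw [← LinearMap.ker_eq_bot, LinearMap.ker_comp, Submodule.ker_mkQ,
      ← Submodule.disjoint_iff_comap_eq_bot]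
    exact disjoint_sInv_sCoinvKer hρ
  have := Module.Finite.of_injective _ hinj
  have := Submodule.nontrivial_iff_ne_bot.2 hne
  obtain ⟨θ, v, hv0, hv⟩ := exists_common_eigenvector (sInvT ρ)
  obtain ⟨χ, hχ, hχ0⟩ := tEigen_ne_bot_of_eigenvector hρ (v := (v : V)) (θ := θ)
    (mt ZeroMemClass.coe_eq_zero.1 hv0) fun u => congrArg Subtype.val (hv u)
  exact hχ0 (hp χ hχ)

end Degree

/-! ### Germs at zero -/

section Germs

open Filter
open scoped Topology

variable {K : Type*} [NontriviallyNormedField K]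

section Invariance

variable {E : Type*} {H : Kˣ → E}

lemma eventually_atZero_forall_mem_of_isCompact {C : Set Kˣ} (hC : IsCompact C)
    (hN : ∀ᶠ n in 𝓝 1, ∀ x, H (x * n) = H x) (hH : ∀ u, ∀ᶠ x in atZero K, H (x * u) = H x) :
    ∀ᶠ x in atZero K, ∀ u ∈ C, H (x * u) = H x := by
  refine hC.induction_on (p := fun s => ∀ᶠ x in atZero K, ∀ u ∈ s, H (x * u) = H x)
    (by simp) (fun _ _ hst ht => ht.mono fun x hx u hu => hx u (hst hu)) (fun _ _ hs ht => ?_)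
    fun u _ => ?_
  · filter_upwards [hs, ht] with x hx hx' u hu
    exact hu.elim (hx u) (hx' u)
  · have hu : Tendsto (u⁻¹ * ·) (𝓝 u) (𝓝 1) := by
      simpa using (continuous_const_mul u⁻¹).tendsto u
    refine ⟨_, mem_nhdsWithin_of_mem_nhds (hu.eventually hN), ?_⟩
    filter_upwards [hH u] with x hx w hw
    have hxw := hw (x * u)
    rwa [mul_assoc, mul_inv_cancel_left, hx] at hxw

lemma mul_eq_of_norm_le_one {ϖ : Kˣ} (hϖ : ‖(ϖ : K)‖ < 1) {ε : ℝ}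
    (hH : ∀ x : Kˣ, ‖(x : K)‖ < ε → ∀ u : Kˣ, ‖(ϖ : K)‖ ≤ ‖(u : K)‖ → ‖(u : K)‖ ≤ 1 →
      H (x * u) = H x) {x u : Kˣ} (hx : ‖(x : K)‖ < ε) (hu : ‖(u : K)‖ ≤ 1) :
    H (x * u) = H x := by
  have hϖ0 : 0 < ‖(ϖ : K)‖ := norm_pos_iff.2 ϖ.ne_zero
  obtain ⟨k, hk⟩ := exists_pow_lt_of_lt_one (norm_pos_iff.2 u.ne_zero) hϖ
  induction k generalizing x u with
  | zero => exact absurd (hk.trans_le hu) (by simp)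
  | succ k ih =>
    rcases le_or_gt ‖(ϖ : K)‖ ‖(u : K)‖ with hle | hlt
    · exact hH x hx u hle hu
    have hxϖ : ‖((x * ϖ : Kˣ) : K)‖ < ε := by
      rw [Units.val_mul, norm_mul]
      exact (mul_le_of_le_one_right (norm_nonneg _) hϖ.le).trans_lt hx
    have hnorm : ‖((ϖ⁻¹ * u : Kˣ) : K)‖ = ‖(u : K)‖ / ‖(ϖ : K)‖ := by
      rw [Units.val_mul, Units.val_inv_eq_inv_val, norm_mul, norm_inv, inv_mul_eq_div]
    calc H (x * u) = H (x * ϖ * (ϖ⁻¹ * u)) := by rw [mul_assoc, mul_inv_cancel_left]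
      _ = H (x * ϖ) := by
        refine ih hxϖ ?_ ?_ <;> rw [hnorm]
        · exact (div_le_one hϖ0).2 hlt.le
        · rwa [lt_div_iff₀ hϖ0, ← pow_succ]
      _ = H x := hH x hx ϖ le_rfl hϖ.le

lemma exists_eventually_atZero_eq_const [ProperSpace K]
    (hN : ∀ᶠ n in 𝓝 1, ∀ x, H (x * n) = H x) (hH : ∀ u, ∀ᶠ x in atZero K, H (x * u) = H x) :
    ∃ a, ∀ᶠ x in atZero K, H x = a := by
  obtain ⟨z, hz0, hz1⟩ := NormedField.exists_norm_lt_one K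
  obtain ⟨ε, hε, hA⟩ := eventually_atZero_iff.1
    (eventually_atZero_forall_mem_of_isCompact (isCompact_annulus hz0 1) hN hH)
  have hle : ∀ x y : Kˣ, ‖(x : K)‖ < ε → ‖(y : K)‖ ≤ ‖(x : K)‖ → H y = H x := by
    intro x y hx hyx
    have h := mul_eq_of_norm_le_one (ϖ := Units.mk0 z (norm_pos_iff.1 hz0)) hz1
      (fun x hx u hu hu1 => hA x hx u ⟨hu, hu1⟩) (u := x⁻¹ * y) hx (by
        rw [Units.val_mul, Units.val_inv_eq_inv_val, norm_mul, norm_inv, inv_mul_eq_div]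
        exact div_le_one_of_le₀ hyx (norm_nonneg _))
    rwa [mul_inv_cancel_left] at h
  obtain ⟨y, hy0, hyε⟩ := NormedField.exists_norm_lt K hε
  let x₀ : Kˣ := Units.mk0 y (norm_pos_iff.1 hy0)
  refine ⟨H x₀, eventually_atZero_iff.2 ⟨ε, hε, fun x hx => ?_⟩⟩
  exact (le_total ‖(x : K)‖ ‖(x₀ : K)‖).elim (hle x₀ x hyε) fun h => (hle x x₀ hx h).symm

end Invariance

/-- If the germ of `φ` is nonzero then `χ` is trivial wherever `φ` is invariant, so that
`φ * χ⁻¹` has an invariant germ. -/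
lemma exists_eventually_atZero_eq_mul_char [ProperSpace K] {φ : Kˣ → ℂ} {χ : Kˣ →* ℂˣ}
    (hN : ∀ᶠ n in 𝓝 1, ∀ x, φ (x * n) = φ x)
    (hφ : ∀ u, ∀ᶠ x in atZero K, φ (x * u) = χ u * φ x) :
    ∃ a, ∀ᶠ x in atZero K, φ x = a * χ x := by
  by_cases h0 : ∀ᶠ x in atZero K, φ x = 0
  · exact ⟨0, h0.mono fun x hx => by rw [hx, zero_mul]⟩
  have hχ : ∀ n, (∀ x, φ (x * n) = φ x) → χ n = 1 := fun n hn => by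
    obtain ⟨x, hx0, hx⟩ := ((not_eventually.1 h0).and_eventually (hφ n)).exists
    rw [hn] at hx
    exact Units.ext ((mul_eq_right₀ hx0).1 hx.symm)
  obtain ⟨a, ha⟩ := exists_eventually_atZero_eq_const (H := fun x => φ x * (χ x : ℂ)⁻¹)
    (hN.mono fun n hn x => by simp only [hn, map_mul, hχ n hn, mul_one])
    (fun u => (hφ u).mono fun x hx => by
      simp only [hx, map_mul, Units.val_mul]
      field_simp [(χ u).ne_zero])
  exact ⟨a, ha.mono fun x hx => (mul_inv_eq_iff_eq_mul₀ (χ x).ne_zero).1 hx⟩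

end Germs

/-! ### Models and embeddings -/

section Models

open Aff Filter
open scoped Topology

variable {K : Type*} [NontriviallyNormedField K] {V : Type*} [AddCommGroup V] [Module ℂ V]

lemma mk_mem_tEigenT_piZeroT_iff {ρ : Rep K V} {χ : Kˣ →* ℂˣ} {v : V} :
    (sCoinvKer ρ).mkQ v ∈ tEigenT (piZeroT ρ) χ ↔
      ∀ u, ρ (xT u) v - (χ u : ℂ) • v ∈ sCoinvKer ρ :=
  forall_congr' fun _ => Submodule.Quotient.eq _

lemma tTwistKerT_ne_top_iff {X : Type*} [AddCommGroup X] [Module ℂ X] [Module.Finite ℂ X]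
    (τ : Representation ℂ Kˣ X) (χ : Kˣ →* ℂˣ) : tTwistKerT τ χ ≠ ⊤ ↔ tEigenT τ χ ≠ ⊥ :=
  (twistKer_ne_top_iff τ ((Units.coeHom ℂ).comp χ)).trans <| by
    simp only [Submodule.ne_bot_iff, mem_tEigenT, and_comm]
    rfl

section Germs

variable [ProperSpace K] {ρ : Rep K V} {ψ : AddChar K ℂ} {Φ : V →ₗ[ℂ] Kˣ → ℂ} {χ : Kˣ →* ℂˣ}

lemma IsKirillovMap.perfect (hΦ : IsKirillovMap ρ ψ Φ) (hinj : Function.Injective Φ) :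
    Perfect ρ := fun _ _ => (Submodule.eq_bot_iff _).2 fun v hv =>
  (map_eq_zero_iff Φ hinj).1 <| eq_zero_of_mem_tEigen_repCx (hΦ.mem_Cb v) fun u =>
    (hΦ.equivariant _ v).symm.trans ((congrArg Φ (hv u)).trans (map_smul Φ _ v))

variable (hψlc : IsLocallyConstant ψ) (hρ : IsSmoothRep ρ) (hΦ : IsKirillovMap ρ ψ Φ)
include hψlc hρ hΦ

lemma IsKirillovMap.exists_eventually_eq_mul_char {v : V}
    (hv : ∀ u, ρ (xT u) v - (χ u : ℂ) • v ∈ sCoinvKer ρ) :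
    ∃ a, ∀ᶠ x in atZero K, Φ v x = a * χ x := by
  have hxT : ∀ u x, Φ (ρ (xT u) v) x = Φ v (x * u) := fun u x => by
    simp [hΦ.equivariant (xT u) v]
  refine exists_eventually_atZero_eq_mul_char ?_ fun u => ?_
  · have hone : (1 : Kˣ) ∈ {u | ρ (xT u) v = v} := by
      rw [Set.mem_ofPred_eq, ← xTHom_apply, map_one, map_one, Module.End.one_apply]
    filter_upwards [(hρ.comp_xTHom v).mem_nhds hone] with u hu x
    rw [← hxT, show ρ (xT u) v = v from hu]
  · filter_upwards [eventually_atZero_eq_zero_of_mem_SSx (hΦ.map_mem_SSx hψlc (hv u))] with x hx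
    rw [map_sub, map_smul, Pi.sub_apply, hxT] at hx
    exact sub_eq_zero.1 hx

variable (hψ : ψ ≠ 1) (hinj : Function.Injective Φ)
include hψ hinj

lemma IsKirillovMap.exists_ne_zero_eventually_eq_mul_char {v : V} (hv0 : v ∉ sCoinvKer ρ)
    (hv : ∀ u, ρ (xT u) v - (χ u : ℂ) • v ∈ sCoinvKer ρ) :
    ∃ a ≠ 0, ∀ᶠ x in atZero K, Φ v x = a * χ x := by
  obtain ⟨a, ha⟩ := hΦ.exists_eventually_eq_mul_char hψlc hρ hv
  refine ⟨a, ?_, ha⟩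
  rintro rfl
  exact hv0 <| (hΦ.map_mem_SSx_iff hψlc hψ hinj).1 <|
    mem_SSx_of_mem_Cb (hΦ.mem_Cb v) (ha.mono fun x hx => hx.trans (zero_mul _))

/-- Two eigenvectors for `χ` have proportional germs at zero, hence proportional classes. -/
lemma IsKirillovMap.tCyclic_piZeroT : TCyclic (piZeroT ρ) := by
  intro χ
  by_cases hbot : tEigenT (piZeroT ρ) χ = ⊥
  · rw [hbot, finrank_bot]
    exact zero_le_one
  obtain ⟨x, hx, hx0⟩ := Submodule.exists_mem_ne_zero_of_ne_bot hbot
  obtain ⟨v, rfl⟩ := (sCoinvKer ρ).mkQ_surjective x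
  obtain ⟨a, ha0, ha⟩ := hΦ.exists_ne_zero_eventually_eq_mul_char hψlc hρ hψ hinj
    (mt (Submodule.Quotient.mk_eq_zero _).2 hx0) (mk_mem_tEigenT_piZeroT_iff.1 hx)
  refine finrank_le_one ⟨_, hx⟩ ?_
  rintro ⟨y, hy⟩
  obtain ⟨w, rfl⟩ := (sCoinvKer ρ).mkQ_surjective y
  obtain ⟨b, hb⟩ := hΦ.exists_eventually_eq_mul_char hψlc hρ (mk_mem_tEigenT_piZeroT_iff.1 hy)
  have hSSx : Φ ((b / a) • v - w) ∈ SSx K := by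
    refine mem_SSx_of_mem_Cb (hΦ.mem_Cb _) ?_
    filter_upwards [ha, hb] with u hau hbu
    rw [map_sub, map_smul, Pi.sub_apply, Pi.smul_apply, hau, hbu, smul_eq_mul]
    field_simp
    ring
  exact ⟨b / a, Subtype.ext <|
    (Submodule.Quotient.eq _).2 ((hΦ.map_mem_SSx_iff hψlc hψ hinj).1 hSSx)⟩

end Germs

lemma SmoothMulChar.isLocallyConstant {χ : Kˣ →* ℂˣ} (hχ : SmoothMulChar χ) :
    IsLocallyConstant fun u => (χ u : ℂ) := by
  refine (IsLocallyConstant.iff_eventually_eq _).2 fun u => ?_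
  have hu : Tendsto (u⁻¹ * ·) (𝓝 u) (𝓝 1) := by
    simpa using (continuous_const_mul u⁻¹).tendsto u
  filter_upwards [hu (hχ.mem_nhds (map_one χ))] with w hw
  have hw' : χ (u⁻¹ * w) = 1 := hw
  rw [map_mul, map_inv, inv_mul_eq_one] at hw'
  rw [hw']

/-- The standard model of `𝔼[χ]`: the multiplication by `χ` of the restriction to `k^×`. -/
def eRepModel (χ : Kˣ →* ℂˣ) : CcK K →ₗ[ℂ] Kˣ → ℂ where
  toFun g u := χ u * (g : K → ℂ) u
  map_add' _ _ := funext fun _ => mul_add _ _ _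
  map_smul' _ _ := funext fun _ => mul_left_comm _ _ _

lemma eRepModel_apply (χ : Kˣ →* ℂˣ) (g : CcK K) (u : Kˣ) :
    eRepModel χ g u = χ u * (g : K → ℂ) u := rfl

lemma eRepModel_injective (χ : Kˣ →* ℂˣ) : Function.Injective (eRepModel (K := K) χ) := by
  refine (injective_iff_map_eq_zero _).2 fun g hg => Subtype.ext ?_
  refine ((mem_CcK K _).1 g.2).1.continuous.ext_on (dense_compl_singleton 0) continuous_const ?_
  exact fun x hx => (mul_eq_zero.1 (congrFun hg (Units.mk0 x hx))).resolve_left (Units.ne_zero _)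

lemma eRepModel_mem_Cb {χ : Kˣ →* ℂˣ} (hχ : SmoothMulChar χ) (g : CcK K) :
    eRepModel χ g ∈ Cb K := by
  obtain ⟨hlc, hcs⟩ := (mem_CcK K _).1 g.2
  refine ⟨hχ.isLocallyConstant.mul (hlc.comp_continuous Units.continuous_val), ?_⟩
  refine hcs.isCompact.of_isClosed_subset isClosed_closure ?_
  refine closure_minimal ?_ (isClosed_tsupport _)
  rintro _ ⟨u, hu, rfl⟩
  exact subset_tsupport _ (right_ne_zero_of_mul hu)

variable {ψ : AddChar K ℂ} (hψlc : IsLocallyConstant ψ) {χ : Kˣ →* ℂˣ}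

lemma eRepModel_equivariant : GRep.Equivariant (ERep ψ hψlc χ) (repCx K ψ) (eRepModel χ) := by
  intro g f
  funext u
  rw [repCx_apply, eRepModel_apply, eRepModel_apply, ERep, GRep.sub_apply, repCc_apply, map_mul χ,
    Units.val_mul, Units.val_mul]
  ring

lemma isKirillovMap_eRepModel (hχ : SmoothMulChar χ) :
    IsKirillovMap (ERep ψ hψlc χ) ψ (eRepModel χ) :=
  ⟨eRepModel_equivariant hψlc, eRepModel_mem_Cb hχ⟩

lemma exists_equivariant_comp_eq {G X Y Z : Type*} [Monoid G] [AddCommGroup X] [Module ℂ X]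
    [AddCommGroup Y] [Module ℂ Y] [AddCommGroup Z] [Module ℂ Z] {τ : Representation ℂ G X}
    {ρ : Representation ℂ G Y} {σ : Representation ℂ G Z} {E : X →ₗ[ℂ] Z} {Φ : Y →ₗ[ℂ] Z}
    (hE : GRep.Equivariant τ σ E) (hΦ : GRep.Equivariant ρ σ Φ) (hinj : Function.Injective Φ)
    (hle : LinearMap.range E ≤ LinearMap.range Φ) :
    ∃ f, GRep.Equivariant τ ρ f ∧ Φ.comp f = E := by
  let e := LinearEquiv.ofInjective Φ hinj
  let f : X →ₗ[ℂ] Y := e.symm.toLinearMap.comp (E.codRestrict _ fun x => hle ⟨x, rfl⟩)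
  have hf : ∀ x, Φ (f x) = E x := fun x => congrArg Subtype.val (e.apply_symm_apply _)
  exact ⟨f, fun g x => hinj (by rw [hf, hΦ, hf, hE]), LinearMap.ext hf⟩

include hψlc in
lemma IsKirillovMap.SSx_le_range [ProperSpace K] (hψ : ψ ≠ 1) {ρ : Rep K V} {Φ : V →ₗ[ℂ] Kˣ → ℂ}
    (hΦ : IsKirillovMap ρ ψ Φ) (hne : Φ ≠ 0) : SSx K ≤ LinearMap.range Φ :=
  SSx_le_of_invariant hψlc hψ (GRep.range_invariant ρ _ Φ hΦ.equivariant)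
    hΦ.range_le_Cb (mt LinearMap.range_eq_bot.1 hne)

lemma range_eRepModel_le [ProperSpace K] (hχ : SmoothMulChar χ) {U : Submodule ℂ (Kˣ → ℂ)}
    (hU : SSx K ≤ U) {F : Kˣ → ℂ} (hFU : F ∈ U) (hF : F ∈ Cb K) {a : ℂ} (ha0 : a ≠ 0)
    (ha : ∀ᶠ x in atZero K, F x = a * χ x) : LinearMap.range (eRepModel χ) ≤ U := by
  rintro _ ⟨g, rfl⟩
  have hg : eRepModel χ g - ((g : K → ℂ) 0 / a) • F ∈ SSx K := by
    refine mem_SSx_of_mem_Cb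
      (sub_mem (eRepModel_mem_Cb hχ g) (Submodule.smul_mem _ _ hF)) ?_
    filter_upwards [ha, preimage_mem_comap (((mem_CcK K _).1 g.2).1.eventually_eq 0)]
      with u hau hgu
    rw [Pi.sub_apply, Pi.smul_apply, eRepModel_apply, hau,
      show (g : K → ℂ) u = (g : K → ℂ) 0 from hgu, smul_eq_mul]
    field_simp
    ring
  exact (Submodule.sub_mem_iff_left _ (U.smul_mem _ hFU)).1 (hU hg)

lemma IsKirillovMap.exists_injective_equivariant [ProperSpace K]
    (hψ : ψ ≠ 1) {ρ : Rep K V} (hρ : IsSmoothRep ρ) {Φ : V →ₗ[ℂ] Kˣ → ℂ}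
    (hΦ : IsKirillovMap ρ ψ Φ) (hinj : Function.Injective Φ) (hχ : SmoothMulChar χ)
    (hne : tEigenT (piZeroT ρ) χ ≠ ⊥) :
    ∃ f : CcK K →ₗ[ℂ] V, Function.Injective f ∧ GRep.Equivariant (ERep ψ hψlc χ) ρ f := by
  obtain ⟨x, hx, hx0⟩ := Submodule.exists_mem_ne_zero_of_ne_bot hne
  obtain ⟨v, rfl⟩ := (sCoinvKer ρ).mkQ_surjective x
  have hv0 : v ∉ sCoinvKer ρ := mt (Submodule.Quotient.mk_eq_zero _).2 hx0
  obtain ⟨a, ha0, ha⟩ := hΦ.exists_ne_zero_eventually_eq_mul_char hψlc hρ hψ hinj hv0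
    (mk_mem_tEigenT_piZeroT_iff.1 hx)
  have hΦ0 : Φ ≠ 0 := by
    rintro rfl
    exact hv0 ((hinj rfl : v = 0) ▸ zero_mem _)
  obtain ⟨f, hf, hcomp⟩ := exists_equivariant_comp_eq (eRepModel_equivariant hψlc)
    hΦ.equivariant hinj (range_eRepModel_le hχ (hΦ.SSx_le_range hψlc hψ hΦ0) ⟨v, rfl⟩
      (hΦ.mem_Cb v) ha0 ha)
  refine ⟨f, .of_comp (f := Φ) ?_, hf⟩
  rw [← LinearMap.coe_comp, hcomp]
  exact eRepModel_injective χ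

end Models

/-! ### Perfectness from embeddings of `𝔼[χ]` -/

section Embeddings

open Aff

variable {K : Type*} [NontriviallyNormedField K]
variable {V W : Type*} [AddCommGroup V] [Module ℂ V] [AddCommGroup W] [Module ℂ W]
variable {ρ : Rep K V} {χ : Kˣ →* ℂˣ}

/-- Conjugating `s_b` by a contracting element of `T` makes it small enough to fix `v`. -/
lemma tEigen_le_sInv (hρ : IsSmoothRep ρ) : tEigen ρ χ ≤ sInv ρ := by
  intro v hv b
  have hvχ : ∀ u, ρ (xT u) v = (χ u : ℂ) • v := hv
  obtain ⟨ε, hε, hfix⟩ := hρ.exists_forall_norm_lt v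
  obtain ⟨y, hy, hyε⟩ := NormedField.exists_norm_lt K (r := ε / (‖b‖ + 1)) (by positivity)
  let u : Kˣ := Units.mk0 y (norm_pos_iff.1 hy)
  have hub : ‖u * b‖ < ε := by
    rw [lt_div_iff₀ (by positivity), mul_add_one] at hyε
    rw [norm_mul]
    exact (lt_add_of_pos_right _ hy).trans hyε
  refine (ρ.apply_bijective (xT u)).1 ?_
  rw [← Module.End.mul_apply, ← map_mul, xT_mul_sS, map_mul, Module.End.mul_apply, hvχ, map_smul,
    hfix _ hub]

lemma mkQ_mem_tEigenT_piZeroT {v : V} (hv : v ∈ tEigen ρ χ) :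
    (sCoinvKer ρ).mkQ v ∈ tEigenT (piZeroT ρ) χ :=
  fun u => congrArg (sCoinvKer ρ).mkQ (hv u)

lemma mkQ_ne_zero_of_mem_tEigen [IsUltrametricDist K] [ProperSpace K] (hρ : IsSmoothRep ρ)
    {v : V} (hv : v ∈ tEigen ρ χ) (hv0 : v ≠ 0) : (sCoinvKer ρ).mkQ v ≠ 0 := fun h0 =>
  hv0 <| Submodule.disjoint_def.1 (disjoint_sInv_sCoinvKer hρ) v (tEigen_le_sInv hρ hv) <|
    (Submodule.Quotient.mk_eq_zero _).1 h0

lemma TCyclic.exists_smul_eq {X : Type*} [AddCommGroup X] [Module ℂ X] [Module.Finite ℂ X]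
    {τ : Representation ℂ Kˣ X} (hτ : TCyclic τ) {x y : X} (hx : x ∈ tEigenT τ χ) (hx0 : x ≠ 0)
    (hy : y ∈ tEigenT τ χ) : ∃ a : ℂ, a • x = y := by
  have hx0' : (⟨x, hx⟩ : tEigenT τ χ) ≠ 0 := fun h => hx0 (congrArg Subtype.val h)
  have hrank : Module.finrank ℂ (tEigenT τ χ) = 1 :=
    (hτ χ).antisymm (Module.finrank_pos_iff_exists_ne_zero.2 ⟨_, hx0'⟩)
  obtain ⟨a, ha⟩ := exists_smul_eq_of_finrank_eq_one hrank hx0' ⟨y, hy⟩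
  exact ⟨a, congrArg Subtype.val ha⟩

lemma mem_sInv_of_map_mem_sInv {σ : Rep K W} {f : V →ₗ[ℂ] W} (hf : GRep.Equivariant ρ σ f)
    (hinj : Function.Injective f) {v : V} (hv : f v ∈ sInv σ) : v ∈ sInv ρ :=
  fun b => hinj ((hf _ _).trans (hv b))

lemma exists_ev0_eq_one [IsUltrametricDist K] [ProperSpace K] : ∃ g : CcK K, ev0 g = 1 := by
  have hball := IsUltrametricDist.isClopen_closedBall (0 : K) one_ne_zero
  refine ⟨⟨LocallyConstant.charFn ℂ hball, LocallyConstant.isLocallyConstant _,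
    .intro (isCompact_closedBall 0 1) fun x hx => ?_⟩, ?_⟩
  · rw [LocallyConstant.coe_charFn, Set.indicator_of_notMem hx]
  · change LocallyConstant.charFn ℂ hball 0 = 1
    rw [LocallyConstant.coe_charFn,
      Set.indicator_of_mem (Metric.mem_closedBall_self zero_le_one), Pi.one_apply]

section ERep

variable {ψ : AddChar K ℂ} (hψlc : IsLocallyConstant ψ)

lemma ev0_ERep_sS (b : K) (g : CcK K) : ev0 (ERep ψ hψlc χ (sS b) g) = ev0 g := by
  change repCc K ψ χ (sS b) g 0 = (g : K → ℂ) 0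
  simp

lemma ev0_ERep_xT (u : Kˣ) (g : CcK K) : ev0 (ERep ψ hψlc χ (xT u) g) = χ u * ev0 g := by
  change repCc K ψ χ (xT u) g 0 = χ u * (g : K → ℂ) 0
  simp

lemma ev0_sAct_ERep (α : MonoidAlgebra ℂ (Multiplicative K)) (g : CcK K) :
    ev0 (sAct (ERep ψ hψlc χ) α g) = fourier ψ 0 α * ev0 g :=
  functional_asAlgebraHom (fun b g => by
    rw [AddChar.mulShift_zero]
    exact (ev0_ERep_sS hψlc b.toAdd g).trans (one_mul _).symm) α g

lemma sInv_ERep (hψ : ψ ≠ 1) : sInv (ERep ψ hψlc χ) = ⊥ := by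
  refine (Submodule.eq_bot_iff _).2 fun g hg => eRepModel_injective χ ?_
  have hmodel : eRepModel χ g ∈ sInv (repCx K ψ) := fun b => by
    rw [← eRepModel_equivariant hψlc, hg b]
  rwa [sInv_repCx hψ, Submodule.mem_bot, ← map_zero (eRepModel χ)] at hmodel

lemma mem_sCoinvKer_ERep_of_ev0_eq_zero [ProperSpace K] (hψ : ψ ≠ 1) (hχ : SmoothMulChar χ)
    {g : CcK K} (hg : ev0 g = 0) : g ∈ sCoinvKer (ERep ψ hψlc χ) := by
  refine ((isKirillovMap_eRepModel hψlc hχ).map_mem_SSx_iff hψlc hψ (eRepModel_injective χ)).1 ?_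
  refine mem_SSx_of_mem_Cb (eRepModel_mem_Cb hχ g) ?_
  filter_upwards [Filter.preimage_mem_comap (((mem_CcK K _).1 g.2).1.eventually_eq 0)] with u hu
  rw [eRepModel_apply, show (g : K → ℂ) u = (g : K → ℂ) 0 from hu, show (g : K → ℂ) 0 = 0 from hg,
    mul_zero]

lemma mkQ_map_mem_tEigenT [ProperSpace K] (hψ : ψ ≠ 1) (hχ : SmoothMulChar χ) {f : CcK K →ₗ[ℂ] V}
    (hf : GRep.Equivariant (ERep ψ hψlc χ) ρ f) (g : CcK K) :
    (sCoinvKer ρ).mkQ (f g) ∈ tEigenT (piZeroT ρ) χ := by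
  refine mk_mem_tEigenT_piZeroT_iff.2 fun u => ?_
  rw [← hf, ← map_smul, ← map_sub]
  refine sCoinvKer_le_comap _ ρ f hf (mem_sCoinvKer_ERep_of_ev0_eq_zero hψlc hψ hχ ?_)
  rw [map_sub, map_smul, ev0_ERep_xT, smul_eq_mul, sub_self]

/-- If `v` is an eigenvector, cyclicity makes the class of some `f g` with `g 0 = 1` a multiple of
that of `v`. An `α` killing the difference maps `f g` to a multiple of `v`, hence `g` to an
`S`-invariant of `𝔼[χ]`, which can only be `0`; but it does not kill the value at `0`. -/
lemma tEigen_eq_bot_of_ERep [IsUltrametricDist K] [ProperSpace K] (hψ : ψ ≠ 1)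
    (hρ : IsSmoothRep ρ) (hχ : SmoothMulChar χ)
    [Module.Finite ℂ (V ⧸ sCoinvKer ρ)] (hcyc : TCyclic (piZeroT ρ))
    {f : CcK K →ₗ[ℂ] V} (hinj : Function.Injective f)
    (hf : GRep.Equivariant (ERep ψ hψlc χ) ρ f) : tEigen ρ χ = ⊥ := by
  by_contra hne
  obtain ⟨v, hv, hv0⟩ := Submodule.exists_mem_ne_zero_of_ne_bot hne
  have hvS := tEigen_le_sInv hρ hv
  obtain ⟨g, hg⟩ := exists_ev0_eq_one (K := K)
  obtain ⟨a, ha⟩ := hcyc.exists_smul_eq (mkQ_mem_tEigenT_piZeroT hv)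
    (mkQ_ne_zero_of_mem_tEigen hρ hv hv0) (mkQ_map_mem_tEigenT hψlc hψ hχ hf g)
  obtain ⟨α, hα, hα0⟩ := (mem_sCoinvKer_iff hψlc hρ _).1 ((Submodule.Quotient.eq _).1 ha.symm)
  have hfα : sAct ρ α (f g) ∈ sInv ρ := by
    rw [map_sub, sub_eq_zero] at hα
    rw [hα, map_smul, sAct_of_mem_sInv ψ hvS]
    exact Submodule.smul_mem _ _ (Submodule.smul_mem _ _ hvS)
  rw [← map_sAct hf] at hfα
  have hgα := mem_sInv_of_map_mem_sInv hf hinj hfα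
  rw [sInv_ERep hψlc hψ, Submodule.mem_bot] at hgα
  have h0 := ev0_sAct_ERep (χ := χ) hψlc α g
  rw [hgα, map_zero, hg, mul_one] at h0
  exact hα0 h0.symm

lemma TCyclic.perfect [IsUltrametricDist K] [ProperSpace K] (hψ : ψ ≠ 1) (hρ : IsSmoothRep ρ)
    [Module.Finite ℂ (V ⧸ sCoinvKer ρ)] (hcyc : TCyclic (piZeroT ρ))
    (hE : ∀ χ, SmoothMulChar χ → tEigenT (piZeroT ρ) χ ≠ ⊥ →
      ∃ f : CcK K →ₗ[ℂ] V, Function.Injective f ∧ GRep.Equivariant (ERep ψ hψlc χ) ρ f) :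
    Perfect ρ := by
  refine fun χ hχ => by_contra fun hne => ?_
  obtain ⟨v, hv, hv0⟩ := Submodule.exists_mem_ne_zero_of_ne_bot hne
  obtain ⟨f, hinj, hf⟩ := hE χ hχ <| (Submodule.ne_bot_iff _).2
    ⟨_, mkQ_mem_tEigenT_piZeroT hv, mkQ_ne_zero_of_mem_tEigen hρ hv hv0⟩
  exact hne (tEigen_eq_bot_of_ERep hψlc hψ hρ hχ hcyc hinj hf)

end ERep

end Embeddings

section Statements

open Aff

variable {K : Type*} [NontriviallyNormedField K] [IsUltrametricDist K] [ProperSpace K]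

theorem statement9_general
    (ψ : AddChar K ℂ) (hψlc : IsLocallyConstant (⇑ψ)) (hψne : ψ ≠ 1)
    {V : Type*} [AddCommGroup V] [Module ℂ V]
    (ρ : Rep K V) (hρ : IsSmoothRep ρ) (c : CompSeries ρ)
    (hdeg : c.deg (SRep ψ hψlc) ≤ 1) :
    (Perfect ρ ↔ ∃ f : V →ₗ[ℂ] (Kˣ → ℂ), Function.Injective f ∧
      GRep.Equivariant ρ (repCx K ψ) f ∧ LinearMap.range f ≤ Cb K) ∧
    (Perfect ρ ↔ (TCyclic (piZeroT ρ) ∧ ∀ χ : Kˣ →* ℂˣ, SmoothMulChar χ →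
      tTwistKerT (piZeroT ρ) χ ≠ ⊤ →
      ∃ f : ↥(CcK K) →ₗ[ℂ] V, Function.Injective f ∧
        GRep.Equivariant (ERep ψ hψlc χ) ρ f)) := by
  have := finite_coinvariants hρ c
  obtain ⟨Φ, hΦ, hker⟩ := c.exists_isKirillovMap_ker_le_sInv hψlc hψne hρ hdeg
  have hinj (hp : Perfect ρ) : Function.Injective Φ :=
    LinearMap.ker_eq_bot.1 (le_bot_iff.1 (hker.trans (hp.sInv_eq_bot hρ).le))
  simp only [tTwistKerT_ne_top_iff]
  refine ⟨⟨fun hp => ?_, ?_⟩, fun hp => ⟨?_, fun χ hχ hne => ?_⟩, ?_⟩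
  · exact ⟨Φ, hinj hp, hΦ.equivariant, hΦ.range_le_Cb⟩
  · rintro ⟨f, hf, hfeq, hfC⟩
    exact IsKirillovMap.perfect ⟨hfeq, fun v => hfC ⟨v, rfl⟩⟩ hf
  · exact hΦ.tCyclic_piZeroT hψlc hρ hψne (hinj hp)
  · exact hΦ.exists_injective_equivariant hψlc hψne hρ (hinj hp) hχ hne
  · rintro ⟨hcyc, hE⟩
    exact hcyc.perfect hψlc hψne hρ hE

theorem statement9
    (hchar : (2 : K) ≠ 0)
    (ψ : AddChar K ℂ) (hψlc : IsLocallyConstant (⇑ψ)) (hψne : ψ ≠ 1)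
    {V : Type*} [AddCommGroup V] [Module ℂ V]
    (ρ : Rep K V) (hρ : IsSmoothRep ρ) (c : CompSeries ρ)
    (hdeg : c.deg (SRep ψ hψlc) = 1) :
    (Perfect ρ ↔ ∃ f : V →ₗ[ℂ] (Kˣ → ℂ), Function.Injective f ∧
      GRep.Equivariant ρ (repCx K ψ) f ∧ LinearMap.range f ≤ Cb K) ∧
    (Perfect ρ ↔ (TCyclic (piZeroT ρ) ∧ ∀ χ : Kˣ →* ℂˣ, SmoothMulChar χ →
      tTwistKerT (piZeroT ρ) χ ≠ ⊤ →
      ∃ f : ↥(CcK K) →ₗ[ℂ] V, Function.Injective f ∧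
        GRep.Equivariant (ERep ψ hψlc χ) ρ f)) := by
  exact statement9_general ψ hψlc hψne ρ hρ c hdeg.le

end Statements

end PSW
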